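/- arXiv:2512.04633 — 4 statements merged into one kernel-verified Lean document; each statement's English description precedes it below -/
import Mathlib

section
/- Let K ⊆ ℝ² be a Minkowski centered convex body. Then 2/(s(K)+1) ≤ γ(K) ≤ c(s(K)). -/
open scoped Pointwise RealInnerProductSpace
open Set

noncomputable section

abbrev E2 := EuclideanSpace ℝ (Fin 2)

/-- A convex body: compact convex set with nonempty interior. -/
def IsConvexBody (K : Set E2) : Prop :=
  Convex ℝ K ∧ IsCompact K ∧ (interior K).Nonempty

/-- circumradius `R(K,C)` -/
def circum (K C : Set E2) : ℝ :=
  sInf {ρ : ℝ | 0 < ρ ∧ ∃ t : E2, K ⊆ ρ • C + {t}}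

/-- inradius `r(K,C)` -/
def inrad (K C : Set E2) : ℝ :=
  sSup {ρ : ℝ | 0 < ρ ∧ ∃ t : E2, ρ • C + {t} ⊆ K}

/-- width `w(K,C)` -/
def widthB (K C : Set E2) : ℝ := 2 * inrad (K - K) (C - C)

/-- diameter `D(K,C)` -/
def diamB (K C : Set E2) : ℝ := 2 * circum (K - K) (C - C)

/-- Minkowski asymmetry `s(K)` -/
def minkAsym (K : Set E2) : ℝ :=
  sInf {ρ : ℝ | 0 < ρ ∧ ∃ c : E2, K - {c} ⊆ ρ • ({c} - K)}

/-- `K` is Minkowski centered -/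
def MinkCentered (K : Set E2) : Prop := K ⊆ minkAsym K • (-K)

/-- `τ(K)`: smallest `ρ > 0` with `K ∩ (-K) ⊆ ρ • ((K-K)/2)` -/
def tauB (K : Set E2) : ℝ :=
  sInf {ρ : ℝ | 0 < ρ ∧ K ∩ (-K) ⊆ ρ • ((2:ℝ)⁻¹ • (K - K))}

/-- golden ratio -/
def phiR : ℝ := (1 + Real.sqrt 5) / 2

def cExpr2 (s : ℝ) : ℝ :=
  (s^2+1)^2 / ((s^2-1) * (s^2+2*s-1+2*Real.sqrt (s*(s^2-1))))

def cExpr3 (s : ℝ) : ℝ := 2*(s^2-2*s-1) / ((s-3)*(s+1))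

/-- `ŝ`: the unique `s ∈ (φ,2)` where the two expressions agree. -/
def sHat : ℝ := sInf {s : ℝ | phiR < s ∧ s < 2 ∧ cExpr2 s = cExpr3 s}

def cFun (s : ℝ) : ℝ :=
  if s ≤ phiR then 1 else if s ≤ sHat then cExpr2 s else cExpr3 s

/-- polar body -/
def polarBody (K : Set E2) : Set E2 := {y | ∀ x ∈ K, (inner ℝ x y : ℝ) ≤ 1}

/-- `γ(K)` -/
def gammaB (K : Set E2) : ℝ :=
  sInf {ρ : ℝ | 0 < ρ ∧
    polarBody ((2:ℝ)⁻¹ • (polarBody K - polarBody K)) ⊆ ρ • convexHull ℝ (K ∪ -K)}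

/-- positive hull of two points -/
def posHull2 (a b : E2) : Set E2 := {x | ∃ α β : ℝ, 0 ≤ α ∧ 0 ≤ β ∧ x = α • a + β • b}

/-- asymmetry point of `K`: a point of `bd(K) ∩ bd(−(1/s(K))·K)` -/
def IsAsymPoint (K : Set E2) (p : E2) : Prop :=
  p ∈ frontier K ∧ p ∈ frontier ((-(minkAsym K)⁻¹) • K)

/-- a well-spread triple of asymmetry points -/
def WellSpread (K : Set E2) (p1 p2 p3 : E2) : Prop :=
  IsAsymPoint K p1 ∧ IsAsymPoint K p2 ∧ IsAsymPoint K p3 ∧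
  ∃ a1 a2 a3 : E2, a1 ≠ 0 ∧ a2 ≠ 0 ∧ a3 ≠ 0 ∧
    (∀ x ∈ K, (inner ℝ a1 x : ℝ) ≤ inner ℝ a1 p1) ∧
    (∀ x ∈ K, (inner ℝ a2 x : ℝ) ≤ inner ℝ a2 p2) ∧
    (∀ x ∈ K, (inner ℝ a3 x : ℝ) ≤ inner ℝ a3 p3) ∧
    (0:E2) ∈ interior (convexHull ℝ {p1, p2, p3}) ∧
    (0:E2) ∈ convexHull ℝ {a1, a2, a3}

/-- two points of `bd(K) ∩ bd(-K)` are consecutive -/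
def Consecutive (K : Set E2) (z1 z2 : E2) : Prop :=
  ¬ ∃ z, z ∈ frontier K ∩ frontier (-K) ∧ z ∈ interior (posHull2 z1 z2)

/-- point of the plane from coordinates -/
def pt (x y : ℝ) : E2 := (WithLp.equiv 2 (Fin 2 → ℝ)).symm ![x, y]

/-- the golden house -/
def goldenHouse : Set E2 :=
  convexHull ℝ {pt 1 0, pt (-1) 0, pt 1 (-1), pt (-1) (-1), pt 0 phiR}

/-!
Write `s = s(K)`. Since `K` cannot be translated into a position with a smaller ratio, `0` is a
convex combination of normals `a ∈ K°` of supporting lines of `K` at points `p ∈ K` with `-sp ∈ K`.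
For such a `p` the point `2s/(s + 1) • p` lies in `((K° - K°)/2)°`, whereas `a` is at most `s` on
`conv(K ∪ -K)`; this is the lower bound.

For the upper bound, a point outside `c • conv(K ∪ -K)` is separated from it by some `u` with
`±u ∈ K°` and `⟪x, u⟫ > c`, and `x ∈ ((K° - K°)/2)°` means that `⟪x, y⟫ - ⟪x, z⟫ ≤ 2` for all
`y, z ∈ K°`. With `y, z = ±u` this gives `c = 1`. For `s > φ` exactly three contact normals `a i`
are needed, and their weights in the convex combination force `α = -⟪p j, a i⟫` and
`β = -⟪p i, a j⟫` to satisfy `0 ≤ α, β ≤ 1/s` and `(s²α + 1)(s²β + 1) ≥ (s² - 1)²`. Writing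
`x = ξ • p i - η • p j` with `ξ, η ≥ 0`, which is possible for some pair `i ≠ j`, and testing with
`y, z ∈ {a i, a j, ±u}` leaves an optimization in `α` and `β`. It reduces to the sign of a quadratic
polynomial on a half-line: it is nonnegative because its discriminant vanishes (`s ≤ ŝ`) or because
the half-line starts at a root at which the polynomial is increasing (`s > ŝ`).
-/

section Switch

variable {s c : ℝ}

lemma one_lt_of_phiR_lt (hs : phiR < s) : 1 < s :=
  Real.one_lt_goldenRatio.trans hs

lemma add_one_lt_sq_of_phiR_lt (hs : phiR < s) : s + 1 < s ^ 2 := by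
  have hφ : phiR ^ 2 = phiR + 1 := Real.goldenRatio_sq
  have hφ_one : 1 < phiR := Real.one_lt_goldenRatio
  nlinarith

lemma sq_sub_one_pos (hs : 1 < s) : 0 < s ^ 2 - 1 := by nlinarith

lemma cExpr2_pos (hs : 1 < s) : 0 < cExpr2 s := by
  have hq := sq_sub_one_pos hs
  have hden : 0 < s ^ 2 + 2 * s - 1 + 2 * √(s * (s ^ 2 - 1)) := by
    linarith [Real.sqrt_nonneg (s * (s ^ 2 - 1))]
  unfold cExpr2
  positivity

lemma cExpr2_mul_sq_sub_one (hs : 1 < s) :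
    cExpr2 s * (s ^ 2 - 1) = s ^ 2 + 2 * s - 1 - 2 * √(s * (s ^ 2 - 1)) := by
  have hq := sq_sub_one_pos hs
  have hden : 0 < s ^ 2 + 2 * s - 1 + 2 * √(s * (s ^ 2 - 1)) := by
    linarith [Real.sqrt_nonneg (s * (s ^ 2 - 1))]
  have hsqrt : √(s * (s ^ 2 - 1)) ^ 2 = s * (s ^ 2 - 1) := Real.sq_sqrt (by positivity)
  rw [cExpr2, div_mul_eq_mul_div, div_eq_iff (by positivity)]
  linear_combination 4 * (s ^ 2 - 1) * hsqrt

lemma cExpr2_le_one (hs : phiR < s) : cExpr2 s ≤ 1 := by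
  have hs_one := one_lt_of_phiR_lt hs
  have hsqrt : s ≤ √(s * (s ^ 2 - 1)) :=
    Real.le_sqrt_of_sq_le (by nlinarith [add_one_lt_sq_of_phiR_lt hs])
  refine le_of_mul_le_mul_right ?_ (sq_sub_one_pos hs_one)
  linarith [cExpr2_mul_sq_sub_one hs_one]

lemma cExpr3_mul (hs_low : -1 < s) (hs_up : s < 3) :
    cExpr3 s * ((3 - s) * (s + 1)) = 2 * (2 * s + 1 - s ^ 2) := by
  have h₁ : s - 3 ≠ 0 := by linarith
  have h₂ : s + 1 ≠ 0 := by linarith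
  unfold cExpr3
  field_simp
  ring

lemma cExpr3_pos (hs : 1 < s) (hs_two : s ≤ 2) : 0 < cExpr3 s := by
  have hden : 0 < (3 - s) * (s + 1) := mul_pos (by linarith) (by linarith)
  refine pos_of_mul_pos_left ?_ hden.le
  rw [cExpr3_mul (by linarith) (by linarith)]
  nlinarith

lemma cExpr3_le_one (hs_low : -1 < s) (hs_up : s < 3) : cExpr3 s ≤ 1 := by
  have hden : 0 < (3 - s) * (s + 1) := mul_pos (by linarith) (by linarith)
  refine le_of_mul_le_mul_right ?_ hden
  rw [cExpr3_mul hs_low hs_up]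
  nlinarith [sq_nonneg (s - 1)]

/-- The quadratic polynomial in `a` whose nonnegativity on `[(s² - 1)(s - 1), ∞)` makes `c` an
admissible bound on `γ` at asymmetry `s`; here `a = s²α + 1`, where `-α` is the value of one of the
contact normals at the contact point of another one. -/
def slack (s c a : ℝ) : ℝ :=
  c * (s + 1) * (s ^ 2 - 1) ^ 2 + (2 * (s ^ 2 - 1) * c - 2 * s * (s ^ 2 + 1)) * a +
    (2 * s - c * (s - 1)) * a ^ 2

/-- The derivative of `slack s c` at `a`. -/
def slackSlope (s c a : ℝ) : ℝ :=
  2 * (s ^ 2 - 1) * c - 2 * s * (s ^ 2 + 1) + 2 * (2 * s - c * (s - 1)) * a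

/-- The discriminant of `slack s c`, divided by `4s²`. -/
def slackDiscrim (s c : ℝ) : ℝ :=
  (c * (s ^ 2 - 1) - (s ^ 2 + 2 * s - 1)) ^ 2 - 4 * (s * (s ^ 2 - 1))

/-- The cubic whose root in `(φ, 2)` is `ŝ`: up to a positive factor it is minus the slope at
`(s² - 1)(s - 1)` of the slack quadratic for `c = cExpr3 s`. -/
def switchCubic (s : ℝ) : ℝ := s ^ 3 - 7 * s ^ 2 + 9 * s + 1

lemma four_mul_slack (s c a : ℝ) :
    4 * (2 * s - c * (s - 1)) * slack s c a =
      slackSlope s c a ^ 2 - 4 * s ^ 2 * slackDiscrim s c := by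
  unfold slack slackSlope slackDiscrim
  ring

lemma slack_eq_taylor (s c b a : ℝ) :
    slack s c a =
      slack s c b + slackSlope s c b * (a - b) + (2 * s - c * (s - 1)) * (a - b) ^ 2 := by
  unfold slack slackSlope
  ring

lemma leadingCoeff_slack_pos (hs : 1 < s) (hc : c ≤ 1) : 0 < 2 * s - c * (s - 1) := by nlinarith

lemma slackDiscrim_eq_zero_iff (hs : 1 < s) (hc : c ≤ 1) :
    slackDiscrim s c = 0 ↔ c = cExpr2 s := by
  have hq := sq_sub_one_pos hs
  have hsqrt : √(s * (s ^ 2 - 1)) ^ 2 = s * (s ^ 2 - 1) := Real.sq_sqrt (by positivity)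
  have hc_mul := cExpr2_mul_sq_sub_one hs
  constructor
  · intro h
    have hsq : (c * (s ^ 2 - 1) - (s ^ 2 + 2 * s - 1)) ^ 2 = (2 * √(s * (s ^ 2 - 1))) ^ 2 := by
      unfold slackDiscrim at h
      linear_combination h - 4 * hsqrt
    rcases sq_eq_sq_iff_eq_or_eq_neg.1 hsq with hroot | hroot
    · nlinarith [Real.sqrt_nonneg (s * (s ^ 2 - 1))]
    · exact mul_right_cancel₀ hq.ne' (by linarith)
  · rintro rfl
    rw [slackDiscrim, hc_mul]
    linear_combination 4 * hsqrt

lemma slack_cExpr3 (hs_low : -1 < s) (hs_up : s < 3) :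
    slack s (cExpr3 s) ((s ^ 2 - 1) * (s - 1)) = 0 := by
  unfold slack
  linear_combination (s ^ 2 - 1) * (s - 1) * s ^ 2 * cExpr3_mul hs_low hs_up

lemma slackSlope_cExpr3 (hs_low : -1 < s) (hs_up : s < 3) :
    slackSlope s (cExpr3 s) ((s ^ 2 - 1) * (s - 1)) * (3 - s) = -(2 * s * switchCubic s) := by
  unfold slackSlope switchCubic
  linear_combination (2 * (s - 1) - 2 * (s - 1) ^ 3) * cExpr3_mul hs_low hs_up

/-- For `c = cExpr3 s` the point `(s² - 1)(s - 1)` is a root of the slack quadratic, and for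
`c = cExpr2 s` the discriminant vanishes; both happen at once iff it is a double root. -/
lemma cExpr2_eq_cExpr3_iff (hs : 1 < s) (hs_three : s < 3) :
    cExpr2 s = cExpr3 s ↔ switchCubic s = 0 := by
  have hs_low : -1 < s := by linarith
  have hdisc := four_mul_slack s (cExpr3 s) ((s ^ 2 - 1) * (s - 1))
  have hslope := slackSlope_cExpr3 hs_low hs_three
  rw [slack_cExpr3 hs_low hs_three, mul_zero, eq_comm, sub_eq_zero] at hdisc
  rw [eq_comm, ← slackDiscrim_eq_zero_iff hs (cExpr3_le_one hs_low hs_three)]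
  constructor
  · intro h
    rw [h, mul_zero, sq_eq_zero_iff] at hdisc
    rw [hdisc, zero_mul, eq_comm, neg_eq_zero] at hslope
    exact (mul_eq_zero.1 hslope).resolve_left (by positivity)
  · intro h
    rw [h, mul_zero, neg_zero] at hslope
    rw [(mul_eq_zero.1 hslope).resolve_right (by linarith), zero_pow two_ne_zero, eq_comm] at hdisc
    exact (mul_eq_zero.1 hdisc).resolve_left (by positivity)

lemma antitoneOn_switchCubic : AntitoneOn switchCubic (Icc 1 2) := by
  rintro x ⟨hx_one, hx_two⟩ y ⟨hy_one, hy_two⟩ hxy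
  have hfactor : switchCubic y - switchCubic x =
      (y - x) * (x ^ 2 + x * y + y ^ 2 - 7 * (x + y) + 9) := by
    unfold switchCubic
    ring
  have hneg : x ^ 2 + x * y + y ^ 2 - 7 * (x + y) + 9 ≤ 0 := by nlinarith
  linarith [mul_nonpos_of_nonneg_of_nonpos (sub_nonneg.2 hxy) hneg]

lemma exists_cExpr2_eq_cExpr3 : {s : ℝ | phiR < s ∧ s < 2 ∧ cExpr2 s = cExpr3 s}.Nonempty := by
  have hφ : phiR < 17 / 10 := by
    have hsqrt : √5 < 24 / 10 := by
      rw [Real.sqrt_lt' (by norm_num)]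
      norm_num
    unfold phiR
    linarith
  have hcont : ContinuousOn switchCubic (Icc (17 / 10) (19 / 10)) := by
    unfold switchCubic
    fun_prop
  have hzero : (0 : ℝ) ∈ Icc (switchCubic (19 / 10)) (switchCubic (17 / 10)) := by
    unfold switchCubic
    constructor <;> norm_num
  obtain ⟨x, ⟨hx_low, hx_up⟩, hx⟩ := intermediate_value_Icc' (by norm_num) hcont hzero
  exact ⟨x, by linarith, by linarith, (cExpr2_eq_cExpr3_iff (by linarith) (by linarith)).2 hx⟩

lemma switchCubic_nonpos_of_sHat_lt (hs : sHat < s) (hs_two : s ≤ 2) : switchCubic s ≤ 0 := by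
  obtain ⟨x, ⟨hx_phi, hx_two, hx⟩, hxs⟩ := exists_lt_of_csInf_lt exists_cExpr2_eq_cExpr3 hs
  have hx_one := one_lt_of_phiR_lt hx_phi
  rw [← (cExpr2_eq_cExpr3_iff hx_one (by linarith)).1 hx]
  exact antitoneOn_switchCubic ⟨hx_one.le, hx_two.le⟩ ⟨by linarith, hs_two⟩ hxs.le

lemma slack_cExpr2_nonneg (hs : phiR < s) (a : ℝ) : 0 ≤ slack s (cExpr2 s) a := by
  have hs_one := one_lt_of_phiR_lt hs
  have hc := cExpr2_le_one hs
  have hsquare := four_mul_slack s (cExpr2 s) a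
  rw [(slackDiscrim_eq_zero_iff hs_one hc).2 rfl, mul_zero, sub_zero] at hsquare
  have hlead := leadingCoeff_slack_pos hs_one hc
  refine nonneg_of_mul_nonneg_right (a := 4 * (2 * s - cExpr2 s * (s - 1))) ?_ (by positivity)
  rw [hsquare]
  positivity

lemma slack_cExpr3_nonneg (hs : 1 < s) (hs_three : s < 3) (hcubic : switchCubic s ≤ 0) {a : ℝ}
    (ha : (s ^ 2 - 1) * (s - 1) ≤ a) : 0 ≤ slack s (cExpr3 s) a := by
  have hs_low : -1 < s := by linarith
  have hlead := leadingCoeff_slack_pos hs (cExpr3_le_one hs_low hs_three)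
  have hslope : 0 ≤ slackSlope s (cExpr3 s) ((s ^ 2 - 1) * (s - 1)) := by
    refine nonneg_of_mul_nonneg_left ?_ (sub_pos.2 hs_three)
    rw [slackSlope_cExpr3 hs_low hs_three]
    nlinarith
  rw [slack_eq_taylor s _ ((s ^ 2 - 1) * (s - 1)), slack_cExpr3 hs_low hs_three]
  exact add_nonneg (add_nonneg le_rfl (mul_nonneg hslope (sub_nonneg.2 ha))) (by positivity)

lemma cFun_of_le_phiR (hs : s ≤ phiR) : cFun s = 1 := if_pos hs

lemma cFun_pos (hs_two : s ≤ 2) : 0 < cFun s := by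
  unfold cFun
  split_ifs with hφ
  · exact one_pos
  · exact cExpr2_pos (one_lt_of_phiR_lt (not_le.1 hφ))
  · exact cExpr3_pos (one_lt_of_phiR_lt (not_le.1 hφ)) hs_two

lemma slack_cFun_nonneg (hs : phiR < s) (hs_two : s ≤ 2) {a : ℝ}
    (ha : (s ^ 2 - 1) * (s - 1) ≤ a) : 0 ≤ slack s (cFun s) a := by
  have hs_one := one_lt_of_phiR_lt hs
  rw [cFun, if_neg (not_le.2 hs)]
  split_ifs with hsHat
  · exact slack_cExpr2_nonneg hs a
  · exact slack_cExpr3_nonneg hs_one (by linarith)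
      (switchCubic_nonpos_of_sHat_lt (not_le.1 hsHat) hs_two) ha

/-- With `a = s²α + 1` and `b = s²β + 1`, the difference of the two sides times `as³` is
`slack s c a + cs(1 - sα)(ab - (s² - 1)²)`. -/
lemma two_mul_one_sub_le_cFun_mul {α β : ℝ} (hs : phiR < s) (hs_two : s ≤ 2)
    (hα : 0 ≤ α) (hα_le : s * α ≤ 1) (hβ_le : s * β ≤ 1)
    (hαβ : (s ^ 2 - 1) ^ 2 ≤ (s ^ 2 * α + 1) * (s ^ 2 * β + 1)) :
    2 * (1 - α) ≤ cFun s * (s * (1 - α * β) + (β - α)) := by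
  have hs_one := one_lt_of_phiR_lt hs
  have hc := cFun_pos hs_two
  have ha : (s ^ 2 - 1) * (s - 1) ≤ s ^ 2 * α + 1 := by
    refine le_of_mul_le_mul_right ?_ (by linarith : 0 < s + 1)
    calc (s ^ 2 - 1) * (s - 1) * (s + 1) = (s ^ 2 - 1) ^ 2 := by ring
      _ ≤ (s ^ 2 * α + 1) * (s ^ 2 * β + 1) := hαβ
      _ ≤ (s ^ 2 * α + 1) * (s + 1) := by gcongr; nlinarith
  have hidentity : (s ^ 2 * α + 1) * s ^ 3 *
        (cFun s * (s * (1 - α * β) + (β - α)) - 2 * (1 - α)) =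
      slack s (cFun s) (s ^ 2 * α + 1) + cFun s * (s * (1 - s * α)) *
        ((s ^ 2 * α + 1) * (s ^ 2 * β + 1) - (s ^ 2 - 1) ^ 2) := by
    unfold slack
    ring
  have hslack := slack_cFun_nonneg hs hs_two ha
  have hcoeff : 0 ≤ cFun s * (s * (1 - s * α)) :=
    mul_nonneg hc.le (mul_nonneg (by linarith) (sub_nonneg.2 hα_le))
  refine sub_nonneg.1
    (nonneg_of_mul_nonneg_right (a := (s ^ 2 * α + 1) * s ^ 3) ?_ (by positivity))
  rw [hidentity]
  exact add_nonneg hslack (mul_nonneg hcoeff (sub_nonneg.2 hαβ))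

lemma le_cFun_of_mul_le {α β A B v : ℝ} (hs : phiR < s) (hs_two : s ≤ 2)
    (hα : 0 ≤ α) (hα_le : s * α ≤ 1) (hβ : 0 ≤ β) (hβ_le : s * β ≤ 1)
    (hαβ : (s ^ 2 - 1) ^ 2 ≤ (s ^ 2 * α + 1) * (s ^ 2 * β + 1))
    (hAB : A + B ≤ 2) (hvA : v ≤ A) (hvB : v ≤ B)
    (hv : v * (s * (1 - α * β)) ≤ A * (1 - β) + B * (1 - α)) : v ≤ cFun s := by
  wlog hle : α ≤ β generalizing α β A B
  · exact this hβ hβ_le hα hα_le (by linarith) (by linarith) hvB hvA (by linarith) (by linarith)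
  have hs_one := one_lt_of_phiR_lt hs
  have hβ_lt : β < 1 := by nlinarith
  have hden : 0 < s * (1 - α * β) + (β - α) := by
    have : α * β < 1 := by nlinarith
    have : 0 < s * (1 - α * β) := mul_pos (by linarith) (by linarith)
    linarith
  refine le_of_mul_le_mul_right ?_ hden
  calc v * (s * (1 - α * β) + (β - α))
      ≤ A * (1 - β) + B * (1 - α) + A * (β - α) := by
        linarith [mul_le_mul_of_nonneg_right hvA (sub_nonneg.2 hle)]
    _ = (A + B) * (1 - α) := by ring
    _ ≤ 2 * (1 - α) := by gcongr; linarith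
    _ ≤ cFun s * (s * (1 - α * β) + (β - α)) :=
        two_mul_one_sub_le_cFun_mul hs hs_two hα hα_le hβ_le hαβ

end Switch

section ConvexHull

variable {E : Type*} [NormedAddCommGroup E] [NormedSpace ℝ E] [FiniteDimensional ℝ E]

lemma convexHull_eq_biUnion_image_stdSimplex (T : Set E) :
    convexHull ℝ T = ⋃ k ∈ Finset.range (Module.finrank ℝ E + 2),
      (fun q : (Fin k → ℝ) × (Fin k → E) => ∑ i, q.1 i • q.2 i) ''
        (stdSimplex ℝ (Fin k) ×ˢ univ.pi fun _ => T) := by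
  refine Subset.antisymm (fun x hx => ?_) (iUnion₂_subset fun k _ => ?_)
  · obtain ⟨ι, _, z, w, hz, hz_ind, hw_pos, hw_sum, hwz⟩ :=
      eq_pos_convex_span_of_mem_convexHull hx
    have hcard : Fintype.card ι ≤ Module.finrank ℝ E + 1 :=
      hz_ind.card_le_finrank_succ.trans (Nat.succ_le_succ (Submodule.finrank_le _))
    let e := Fintype.equivFin ι
    refine mem_biUnion (x := Fintype.card ι) (by simpa [Nat.lt_succ_iff] using hcard)
      ⟨(w ∘ e.symm, z ∘ e.symm), ⟨⟨fun i => (hw_pos _).le, ?_⟩, fun i _ => hz ⟨_, rfl⟩⟩, ?_⟩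
    · exact (e.symm.sum_comp w).trans hw_sum
    · exact (e.symm.sum_comp fun i => w i • z i).trans hwz
  · rintro _ ⟨⟨w, z⟩, ⟨⟨hw_nonneg, hw_sum⟩, hz⟩, rfl⟩
    exact (convex_convexHull ℝ T).sum_mem (fun i _ => hw_nonneg i) hw_sum
      fun i _ => subset_convexHull ℝ T (hz i (mem_univ i))

lemma isCompact_convexHull {T : Set E} (hT : IsCompact T) : IsCompact (convexHull ℝ T) := by
  rw [convexHull_eq_biUnion_image_stdSimplex]
  exact Finset.isCompact_biUnion _ fun k _ =>
    ((isCompact_stdSimplex ℝ (Fin k)).prod (isCompact_univ_pi fun _ => hT)).image (by fun_prop)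

end ConvexHull

section Separation

variable {E : Type*} [NormedAddCommGroup E] [InnerProductSpace ℝ E]

lemma exists_inner_le_one_lt_inner [CompleteSpace E] {C : Set E} (hC : Convex ℝ C)
    (hC_closed : IsClosed C) (hC_zero : 0 ∈ C) {z : E} (hz : z ∉ C) :
    ∃ y : E, (∀ x ∈ C, ⟪x, y⟫ ≤ 1) ∧ 1 < ⟪z, y⟫ := by
  obtain ⟨f, r, hfC, hfz⟩ := geometric_hahn_banach_closed_point hC hC_closed hz
  have hr : 0 < r := by simpa using hfC 0 hC_zero
  have hf (x : E) : ⟪x, r⁻¹ • (InnerProductSpace.toDual ℝ E).symm f⟫ = r⁻¹ * f x := by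
    rw [real_inner_smul_right, real_inner_comm, InnerProductSpace.toDual_symm_apply]
  refine ⟨r⁻¹ • (InnerProductSpace.toDual ℝ E).symm f, fun x hx => ?_, ?_⟩
  · rw [hf, inv_mul_le_one₀ hr]
    exact (hfC x hx).le
  · rwa [hf, one_lt_inv_mul₀ hr]

lemma zero_mem_convexHull_of_forall_exists_inner_nonpos [FiniteDimensional ℝ E] {T : Set E}
    (hT : IsCompact T) (h : ∀ t : E, ∃ y ∈ T, ⟪t, y⟫ ≤ 0) : 0 ∈ convexHull ℝ T := by
  by_contra h_notMem
  have := FiniteDimensional.complete ℝ E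
  obtain ⟨f, r, hr, hf⟩ := geometric_hahn_banach_point_closed (convex_convexHull ℝ T)
    (isCompact_convexHull hT).isClosed h_notMem
  obtain ⟨y, hyT, hy⟩ := h ((InnerProductSpace.toDual ℝ E).symm f)
  rw [InnerProductSpace.toDual_symm_apply] at hy
  rw [map_zero] at hr
  linarith [hf y (subset_convexHull ℝ T hyT)]

end Separation

section Polar

variable {K L M : Set E2} {c : ℝ} {x : E2}

lemma isClosed_polarBody (K : Set E2) : IsClosed (polarBody K) := by
  have hK : polarBody K = ⋂ x ∈ K, {y | ⟪x, y⟫ ≤ 1} := by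
    ext y
    simp [polarBody]
  rw [hK]
  exact isClosed_biInter fun x _ => isClosed_le (by fun_prop) continuous_const

lemma isCompact_polarBody (hK : (0 : E2) ∈ interior K) : IsCompact (polarBody K) := by
  obtain ⟨ε, hε, hball⟩ := Metric.nhds_basis_closedBall.mem_iff.1 (mem_interior_iff_mem_nhds.1 hK)
  refine (isCompact_closedBall 0 ε⁻¹).of_isClosed_subset (isClosed_polarBody K) fun y hy => ?_
  rw [mem_closedBall_zero_iff]
  by_cases hy_zero : y = 0
  · simpa [hy_zero] using hε.le
  have hy_norm : 0 < ‖y‖ := norm_pos_iff.2 hy_zero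
  have hmem : (ε / ‖y‖) • y ∈ K := hball <| by
    rw [mem_closedBall_zero_iff, norm_smul, Real.norm_of_nonneg (by positivity),
      div_mul_cancel₀ _ hy_norm.ne']
  have hinner : ⟪(ε / ‖y‖) • y, y⟫ = ε * ‖y‖ := by
    rw [real_inner_smul_left, real_inner_self_eq_norm_sq]
    field_simp
  rw [← one_div, le_div_iff₀' hε, ← hinner]
  exact hy _ hmem

lemma mem_of_forall_polarBody_inner_le_one (hK : Convex ℝ K) (hK_closed : IsClosed K)
    (hK_zero : 0 ∈ K) (hx : ∀ y ∈ polarBody K, ⟪x, y⟫ ≤ 1) : x ∈ K := by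
  by_contra hxK
  obtain ⟨y, hyK, hxy⟩ := exists_inner_le_one_lt_inner hK hK_closed hK_zero hxK
  exact hxy.not_ge (hx y hyK)

lemma mem_polarBody_half_smul_sub_iff :
    x ∈ polarBody ((2 : ℝ)⁻¹ • (L - M)) ↔ ∀ y ∈ L, ∀ z ∈ M, ⟪x, y⟫ - ⟪x, z⟫ ≤ 2 := by
  have hinner (y z : E2) : ⟪(2 : ℝ)⁻¹ • (y - z), x⟫ = 2⁻¹ * (⟪x, y⟫ - ⟪x, z⟫) := by
    rw [real_inner_smul_left, real_inner_comm, inner_sub_right]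
  constructor
  · intro hx y hy z hz
    have := hx _ (smul_mem_smul_set (sub_mem_sub hy hz))
    rw [hinner] at this
    linarith
  · rintro hx _ ⟨_, ⟨y, hy, z, hz, rfl⟩, rfl⟩
    rw [hinner]
    linarith [hx y hy z hz]

lemma exists_mem_polarBody_lt_inner_of_notMem_smul_convexHull (hK : IsCompact K) (hK_zero : 0 ∈ K)
    (hc : 0 < c) (hx : x ∉ c • convexHull ℝ (K ∪ -K)) :
    ∃ u, u ∈ polarBody K ∧ -u ∈ polarBody K ∧ c < ⟪x, u⟫ := by
  rw [mem_smul_set_iff_inv_smul_mem₀ hc.ne'] at hx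
  obtain ⟨u, hu, hxu⟩ := exists_inner_le_one_lt_inner (convex_convexHull ℝ (K ∪ -K))
    (isCompact_convexHull (hK.union hK.neg)).isClosed (subset_convexHull ℝ _ (Or.inl hK_zero)) hx
  refine ⟨u, fun y hy => hu y (subset_convexHull ℝ _ (Or.inl hy)), fun y hy => ?_, ?_⟩
  · rw [inner_neg_right, ← inner_neg_left]
    exact hu (-y) (subset_convexHull ℝ _ (Or.inr (neg_mem_neg.2 hy)))
  · rwa [real_inner_smul_left, one_lt_inv_mul₀ hc] at hxu

end Polar

section Asymmetry

open Filter Topology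

variable {K : Set E2}

lemma minkAsym_pos (hK : IsConvexBody K) (hc : MinkCentered K) : 0 < minkAsym K := by
  have hs : 0 ≤ minkAsym K := Real.sInf_nonneg fun ρ hρ => hρ.1.le
  refine hs.lt_of_ne' fun h_zero => ?_
  have hK_sub : K ⊆ {0} := by
    rw [MinkCentered, h_zero] at hc
    exact hc.trans (zero_smul_set_subset _)
  simpa using hK.2.2.mono (interior_mono hK_sub)

lemma neg_inv_minkAsym_smul_mem (hK : IsConvexBody K) (hc : MinkCentered K) {x : E2}
    (hx : x ∈ K) : -((minkAsym K)⁻¹ • x) ∈ K :=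
  (mem_smul_set_iff_inv_smul_mem₀ (minkAsym_pos hK hc).ne' _ _).1 (hc hx)

lemma zero_mem_interior_of_minkCentered (hK : IsConvexBody K) (hc : MinkCentered K) :
    (0 : E2) ∈ interior K := by
  obtain ⟨x, hx⟩ := hK.2.2
  have hs := minkAsym_pos hK hc
  refine hK.1.openSegment_interior_self_subset_interior hx
    (neg_inv_minkAsym_smul_mem hK hc (interior_subset hx))
    ⟨1 / (minkAsym K + 1), minkAsym K / (minkAsym K + 1), by positivity, by positivity,
      by field_simp; ring, ?_⟩
  rw [smul_neg, smul_smul, ← sub_eq_add_neg, ← sub_smul]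
  convert zero_smul ℝ x
  field_simp
  ring

lemma zero_mem_of_minkCentered (hK : IsConvexBody K) (hc : MinkCentered K) : (0 : E2) ∈ K :=
  interior_subset (zero_mem_interior_of_minkCentered hK hc)

lemma neg_inner_le_minkAsym (hK : IsConvexBody K) (hc : MinkCentered K) {x y : E2} (hx : x ∈ K)
    (hy : y ∈ polarBody K) : -⟪x, y⟫ ≤ minkAsym K := by
  have h := hy _ (neg_inv_minkAsym_smul_mem hK hc hx)
  rwa [inner_neg_left, real_inner_smul_left, ← mul_neg,
    inv_mul_le_one₀ (minkAsym_pos hK hc)] at h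

lemma exists_lt_inner_of_lt_minkAsym (hK : Convex ℝ K) (hK_closed : IsClosed K)
    (hK_zero : 0 ∈ K) {ρ : ℝ} (hρ : 0 < ρ) (hρ_lt : ρ < minkAsym K) (c : E2) :
    ∃ x ∈ K, ∃ y ∈ polarBody K, ρ < (1 + ρ) * ⟪c, y⟫ - ⟪x, y⟫ := by
  by_contra! h
  refine notMem_of_lt_csInf hρ_lt ⟨0, fun _ hr => hr.1.le⟩ ⟨hρ, c, ?_⟩
  rintro _ ⟨x, hx, c, rfl, rfl⟩
  have hmem : ρ⁻¹ • ((1 + ρ) • c - x) ∈ K := by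
    refine mem_of_forall_polarBody_inner_le_one hK hK_closed hK_zero fun y hy => ?_
    rw [real_inner_smul_left, inner_sub_left, real_inner_smul_left, inv_mul_le_one₀ hρ]
    exact h x hx y hy
  refine ⟨_, sub_mem_sub (mem_singleton c) hmem, ?_⟩
  simp only [smul_sub, smul_inv_smul₀ hρ.ne', add_smul, one_smul]
  abel

/-- The normals, scaled to lie in `K°`, of the supporting lines of `K` at those points `p` of `K`
for which `-s(K)p` is in `K` too; these are the common supporting lines at the contact points of
`K` and `-s(K)⁻¹K`. -/
def contactNormals (K : Set E2) : Set E2 :=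
  {a | a ∈ polarBody K ∧ ∃ p ∈ K, -(minkAsym K • p) ∈ K ∧ ⟪p, a⟫ = 1}

lemma mem_contactNormals_of_minkAsym_le (hK : IsConvexBody K) (hc : MinkCentered K) {x y : E2}
    (hx : x ∈ K) (hy : y ∈ polarBody K) (hxy : minkAsym K ≤ -⟪x, y⟫) : y ∈ contactNormals K := by
  have hs := (minkAsym_pos hK hc).ne'
  refine ⟨hy, -((minkAsym K)⁻¹ • x), neg_inv_minkAsym_smul_mem hK hc hx, ?_, ?_⟩
  · rwa [smul_neg, neg_neg, smul_inv_smul₀ hs]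
  · rw [inner_neg_left, real_inner_smul_left, ← mul_neg,
      (neg_inner_le_minkAsym hK hc hx hy).antisymm hxy, inv_mul_cancel₀ hs]

lemma isCompact_contactNormals (hK : IsConvexBody K) (hc : MinkCentered K) :
    IsCompact (contactNormals K) := by
  have himage : contactNormals K = Prod.fst '' ((polarBody K ×ˢ K) ∩
      ((fun q : E2 × E2 => -(minkAsym K • q.2)) ⁻¹' K ∩ {q : E2 × E2 | ⟪q.2, q.1⟫ = 1})) := by
    ext a
    simp only [contactNormals, mem_ofPred_eq, mem_image, Prod.exists, mem_inter_iff, mem_prod,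
      mem_preimage]
    grind
  rw [himage]
  refine (((isCompact_polarBody (zero_mem_interior_of_minkCentered hK hc)).prod hK.2.1).inter_right
    (IsClosed.inter ?_ ?_)).image continuous_fst
  · exact hK.2.1.isClosed.preimage (by fun_prop)
  · exact isClosed_eq (by fun_prop) continuous_const

/-- The center moves by `-εt`, while the ratio `s(1 - ε²)` differs from `s` only to second order. -/
lemma exists_inner_le_of_mem_Ioo (hK : IsConvexBody K) (hc : MinkCentered K) (t : E2) {ε : ℝ}
    (hε : ε ∈ Ioo (0 : ℝ) 1) :
    ∃ x ∈ K, ∃ y ∈ polarBody K, (1 + minkAsym K * (1 - ε ^ 2)) * ⟪t, y⟫ ≤ minkAsym K * ε ∧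
      minkAsym K * (1 - ε ^ 2) ≤
        -ε * ((1 + minkAsym K * (1 - ε ^ 2)) * ⟪t, y⟫) - ⟪x, y⟫ := by
  have hs := minkAsym_pos hK hc
  have hε_sq : ε ^ 2 < 1 := pow_lt_one₀ hε.1.le hε.2 two_ne_zero
  obtain ⟨x, hx, y, hy, hxy⟩ := exists_lt_inner_of_lt_minkAsym hK.1 hK.2.1.isClosed
    (zero_mem_of_minkCentered hK hc) (mul_pos hs (sub_pos.2 hε_sq))
    (mul_lt_of_lt_one_right hs (by linarith [pow_pos hε.1 2])) (-(ε • t))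
  rw [inner_neg_left, real_inner_smul_left] at hxy
  refine ⟨x, hx, y, hy, ?_, by linarith⟩
  refine le_of_mul_le_mul_left ?_ hε.1
  linarith [neg_inner_le_minkAsym hK hc hx hy]

/-- Were all contact normals to have positive inner product with `t`, then translating `K` by a
small multiple of `t` would decrease its asymmetry. -/
lemma exists_mem_contactNormals_inner_nonpos (hK : IsConvexBody K) (hc : MinkCentered K) (t : E2) :
    ∃ a ∈ contactNormals K, ⟪t, a⟫ ≤ 0 := by
  obtain ⟨ε, -, hε, hε_lim⟩ := exists_seq_strictAnti_tendsto' (zero_lt_one' ℝ)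
  choose x hx y hy hty hxy using fun n => exists_inner_le_of_mem_Ioo hK hc t (hε n)
  obtain ⟨⟨x₀, y₀⟩, ⟨hx₀, hy₀⟩, k, hk, hlim⟩ :=
    (hK.2.1.prod (isCompact_polarBody (zero_mem_interior_of_minkCentered hK hc))).tendsto_subseq
      (x := fun n => (x n, y n)) fun n => ⟨hx n, hy n⟩
  have hlim_x : Tendsto (x ∘ k) atTop (𝓝 x₀) := hlim.fst_nhds
  have hlim_y : Tendsto (y ∘ k) atTop (𝓝 y₀) := hlim.snd_nhds
  have hlim_ε : Tendsto (ε ∘ k) atTop (𝓝 0) := hε_lim.comp hk.tendsto_atTop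
  have hlim_ty : Tendsto (fun n => (1 + minkAsym K * (1 - ε (k n) ^ 2)) * ⟪t, y (k n)⟫) atTop
      (𝓝 ((1 + minkAsym K * (1 - 0 ^ 2)) * ⟪t, y₀⟫)) :=
    (((hlim_ε.pow 2).const_sub 1).const_mul _ |>.const_add 1).mul (tendsto_const_nhds.inner hlim_y)
  have hs := minkAsym_pos hK hc
  refine ⟨y₀, mem_contactNormals_of_minkAsym_le hK hc hx₀ hy₀ ?_, ?_⟩
  · have h := le_of_tendsto_of_tendsto' (((hlim_ε.pow 2).const_sub 1).const_mul _)
      ((hlim_ε.neg.mul hlim_ty).sub (hlim_x.inner hlim_y)) fun n => hxy (k n)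
    simpa using h
  · have h := le_of_tendsto_of_tendsto' hlim_ty (hlim_ε.const_mul _) fun n => hty (k n)
    have h' : (1 + minkAsym K) * ⟪t, y₀⟫ ≤ 0 := by simpa using h
    exact nonpos_of_mul_nonpos_right h' (by positivity)

lemma zero_mem_convexHull_contactNormals (hK : IsConvexBody K) (hc : MinkCentered K) :
    (0 : E2) ∈ convexHull ℝ (contactNormals K) :=
  zero_mem_convexHull_of_forall_exists_inner_nonpos (isCompact_contactNormals hK hc)
    (exists_mem_contactNormals_inner_nonpos hK hc)

end Asymmetry

section LowerBound

variable {K : Set E2}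

lemma one_le_minkAsym (hK : IsConvexBody K) (hc : MinkCentered K) : 1 ≤ minkAsym K := by
  obtain ⟨a, ha, p, hp, -, hpa⟩ := convexHull_nonempty_iff.1
    ⟨0, zero_mem_convexHull_contactNormals hK hc⟩
  have hs := minkAsym_pos hK hc
  have h := neg_inner_le_minkAsym hK hc (neg_inv_minkAsym_smul_mem hK hc hp) ha
  rw [inner_neg_left, neg_neg, real_inner_smul_left, hpa, mul_one] at h
  by_contra! hlt
  linarith [one_lt_inv_iff₀.2 ⟨hs, hlt⟩]

lemma inner_le_minkAsym_of_mem_convexHull (hK : IsConvexBody K) (hc : MinkCentered K) {a q : E2}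
    (ha : a ∈ polarBody K) (hq : q ∈ convexHull ℝ (K ∪ -K)) : ⟪q, a⟫ ≤ minkAsym K := by
  suffices h : K ∪ -K ⊆ {q | innerₗ E2 a q ≤ minkAsym K} by
    rw [real_inner_comm]
    exact convexHull_min h (convex_halfSpace_le (innerₗ E2 a).isLinear _) hq
  rintro y (hy | hy)
  · rw [mem_ofPred_eq, innerₗ_apply_apply, real_inner_comm]
    exact (ha y hy).trans (one_le_minkAsym hK hc)
  · have h := neg_inner_le_minkAsym hK hc hy ha
    rwa [inner_neg_left, neg_neg, real_inner_comm] at h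

lemma smul_mem_polarBody_half_smul_sub {s : ℝ} (hs : 0 < s) {p : E2} (hp : p ∈ K)
    (hsp : -(s • p) ∈ K) :
    (2 * s / (s + 1)) • p ∈ polarBody ((2 : ℝ)⁻¹ • (polarBody K - polarBody K)) := by
  rw [mem_polarBody_half_smul_sub_iff]
  intro y hy z hz
  have hy_le := hy p hp
  have hz_le := hz _ hsp
  rw [inner_neg_left, real_inner_smul_left] at hz_le
  rw [real_inner_smul_left, real_inner_smul_left, ← mul_sub, div_mul_eq_mul_div,
    div_le_iff₀ (by positivity)]
  linarith [mul_le_mul_of_nonneg_left hy_le hs.le]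

lemma two_div_minkAsym_add_one_le (hK : IsConvexBody K) (hc : MinkCentered K) {ρ : ℝ} (hρ : 0 < ρ)
    (h : polarBody ((2 : ℝ)⁻¹ • (polarBody K - polarBody K)) ⊆ ρ • convexHull ℝ (K ∪ -K)) :
    2 / (minkAsym K + 1) ≤ ρ := by
  obtain ⟨a, ha, p, hp, hsp, hpa⟩ := convexHull_nonempty_iff.1
    ⟨0, zero_mem_convexHull_contactNormals hK hc⟩
  have hs := minkAsym_pos hK hc
  obtain ⟨q, hq, hqp⟩ := h (smul_mem_polarBody_half_smul_sub hs hp hsp)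
  refine le_of_mul_le_mul_right ?_ hs
  calc 2 / (minkAsym K + 1) * minkAsym K
      = ⟪(2 * minkAsym K / (minkAsym K + 1)) • p, a⟫ := by
        rw [real_inner_smul_left, hpa]
        ring
    _ = ρ * ⟪q, a⟫ := by rw [← hqp, real_inner_smul_left]
    _ ≤ ρ * minkAsym K := by
        gcongr
        exact inner_le_minkAsym_of_mem_convexHull hK hc ha hq

end LowerBound

section BalancedMatrix

variable {ι : Type*} [Fintype ι] {s : ℝ} {m : ι → ι → ℝ} {w : ι → ℝ} {i j : ι}

/-- The matrix `m i j = ⟪p i, a j⟫` of the contact points `p i` and contact normals `a j` of a body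
of asymmetry `s`, together with positive weights `w` expressing `0` as a convex combination of the
normals; only the numerical relations between these data are recorded. -/
structure IsBalanced (s : ℝ) (m : ι → ι → ℝ) (w : ι → ℝ) : Prop where
  weight_pos : ∀ i, 0 < w i
  sum_weight : ∑ i, w i = 1
  sum_weight_mul : ∀ i, ∑ j, w j * m i j = 0
  diag : ∀ i, m i i = 1
  neg_one_le : ∀ i j, -1 ≤ s * m i j

namespace IsBalanced

lemma sum_weight_mul_add_one (h : IsBalanced s m w) (i : ι) :
    ∑ j, w j * (s * m i j + 1) = 1 :=
  calc ∑ j, w j * (s * m i j + 1) = s * ∑ j, w j * m i j + ∑ j, w j := by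
        rw [Finset.mul_sum, ← Finset.sum_add_distrib]
        exact Finset.sum_congr rfl fun j _ => by ring
    _ = 1 := by rw [h.sum_weight_mul, h.sum_weight, mul_zero, zero_add]

lemma weight_mul_nonneg (h : IsBalanced s m w) (i j : ι) : 0 ≤ w j * (s * m i j + 1) :=
  mul_nonneg (h.weight_pos j).le (by linarith [h.neg_one_le i j])

lemma weight_le (h : IsBalanced s m w) (i : ι) : (s + 1) * w i ≤ 1 := by
  have hle := Finset.single_le_sum (fun j _ => h.weight_mul_nonneg i j) (Finset.mem_univ i)
  rw [h.sum_weight_mul_add_one, h.diag] at hle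
  linarith

lemma add_one_le_card (h : IsBalanced s m w) : s + 1 ≤ Fintype.card ι :=
  calc s + 1 = ∑ i, (s + 1) * w i := by rw [← Finset.mul_sum, h.sum_weight, mul_one]
    _ ≤ ∑ _i : ι, 1 := Finset.sum_le_sum fun i _ => h.weight_le i
    _ = Fintype.card ι := by simp

lemma le_two (h : IsBalanced s m w) (hcard : Fintype.card ι ≤ 3) : s ≤ 2 := by
  have h_le : s + 1 ≤ (3 : ℕ) := h.add_one_le_card.trans (Nat.cast_le.2 hcard)
  norm_num at h_le
  linarith

lemma weight_add_weight_le (h : IsBalanced s m w) (hij : i ≠ j) :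
    (s + 1) * w j + w i * (s * m j i + 1) ≤ 1 := by
  have hle := Finset.add_le_sum (fun k _ => h.weight_mul_nonneg j k)
    (Finset.mem_univ i) (Finset.mem_univ j) hij
  rw [h.sum_weight_mul_add_one, h.diag] at hle
  linarith

lemma le_weight_add_weight (h : IsBalanced s m w) (hcard : Fintype.card ι = 3) (hij : i ≠ j) :
    s ≤ (s + 1) * (w i + w j) := by
  have hle := Finset.add_le_sum (f := fun k => 1 - (s + 1) * w k)
    (fun k _ => sub_nonneg.2 (h.weight_le k)) (Finset.mem_univ i) (Finset.mem_univ j) hij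
  rw [Finset.sum_sub_distrib, ← Finset.mul_sum, h.sum_weight, Finset.sum_const, Finset.card_univ,
    hcard] at hle
  norm_num at hle
  linarith

lemma entry_nonpos (h : IsBalanced s m w) (hcard : Fintype.card ι = 3) (hs : phiR < s)
    (hij : i ≠ j) : m j i ≤ 0 := by
  by_contra! hpos
  have hs_one := one_lt_of_phiR_lt hs
  have hmul : 0 < w i * m j i := mul_pos (h.weight_pos i) hpos
  nlinarith [h.weight_add_weight_le hij, h.le_weight_add_weight hcard hij, h.weight_le i,
    add_one_lt_sq_of_phiR_lt hs]

lemma sq_sub_one_mul_weight_le (h : IsBalanced s m w) (hcard : Fintype.card ι = 3) (hs : 0 ≤ s)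
    (hij : i ≠ j) : (s ^ 2 - 1) * w j ≤ (s ^ 2 * -m j i + 1) * w i := by
  have hpair := mul_le_mul_of_nonneg_left (h.weight_add_weight_le hij) hs
  linarith [h.le_weight_add_weight hcard hij]

lemma sq_sub_one_sq_le (h : IsBalanced s m w) (hcard : Fintype.card ι = 3) (hs : phiR < s)
    (hij : i ≠ j) :
    (s ^ 2 - 1) ^ 2 ≤ (s ^ 2 * -m j i + 1) * (s ^ 2 * -m i j + 1) := by
  have hs_one := one_lt_of_phiR_lt hs
  have hs_nonneg : 0 ≤ s := by linarith
  have hq := sq_sub_one_pos hs_one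
  have hwi := h.weight_pos i
  have hwj := h.weight_pos j
  have hji : 0 ≤ -m j i := neg_nonneg.2 (h.entry_nonpos hcard hs hij)
  refine le_of_mul_le_mul_right ?_ (mul_pos hwi hwj)
  calc (s ^ 2 - 1) ^ 2 * (w i * w j) = (s ^ 2 - 1) * w j * ((s ^ 2 - 1) * w i) := by ring
    _ ≤ (s ^ 2 * -m j i + 1) * w i * ((s ^ 2 * -m i j + 1) * w j) := by
        gcongr ?_ * ?_
        · exact h.sq_sub_one_mul_weight_le hcard hs_nonneg hij
        · exact h.sq_sub_one_mul_weight_le hcard hs_nonneg hij.symm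
    _ = (s ^ 2 * -m j i + 1) * (s ^ 2 * -m i j + 1) * (w i * w j) := by ring

lemma entry_mul_entry_lt_one (h : IsBalanced s m w) (hcard : Fintype.card ι = 3) (hs : phiR < s)
    (hij : i ≠ j) : m j i * m i j < 1 := by
  have hs_one := one_lt_of_phiR_lt hs
  nlinarith [h.neg_one_le i j, h.neg_one_le j i, h.entry_nonpos hcard hs hij,
    h.entry_nonpos hcard hs hij.symm]

end IsBalanced

end BalancedMatrix

section Plane

/-- The determinant of two vectors of the plane. -/
def cross (x y : E2) : ℝ := x 0 * y 1 - x 1 * y 0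

lemma cross_mul_cross (a b p q : E2) :
    cross a b * cross p q = ⟪p, a⟫ * ⟪q, b⟫ - ⟪q, a⟫ * ⟪p, b⟫ := by
  simp only [cross, PiLp.inner_apply, Fin.sum_univ_two, RCLike.inner_apply, conj_trivial]
  ring

lemma cross_smul (p q x : E2) : cross p q • x = cross x q • p - cross x p • q := by
  ext k
  fin_cases k <;> simp [cross] <;> ring

/-- Two of the points lie on the same side of the line through `0` and `x`. -/
lemma exists_eq_smul_sub_smul {ι : Type*} [Fintype ι] (hι : 2 < Fintype.card ι) {p : ι → E2}
    (hp : Pairwise fun i j => cross (p i) (p j) ≠ 0) (x : E2) :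
    ∃ i j, i ≠ j ∧ ∃ ξ η : ℝ, 0 ≤ ξ ∧ 0 ≤ η ∧ x = ξ • p i - η • p j := by
  obtain ⟨i, j, hij, hside⟩ := Fintype.exists_ne_map_eq_of_card_lt
    (fun i => decide (0 ≤ cross x (p i))) (by simpa using hι)
  have hmul : 0 ≤ cross x (p j) * cross x (p i) := by
    rw [decide_eq_decide] at hside
    by_cases hi : 0 ≤ cross x (p i)
    · exact mul_nonneg (hside.1 hi) hi
    · exact mul_nonneg_of_nonpos_of_nonpos (not_le.1 (hside.not.1 hi)).le (not_le.1 hi).le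
  have hx : x = (cross x (p j) / cross (p i) (p j)) • p i -
      (cross x (p i) / cross (p i) (p j)) • p j := by
    rw [div_eq_inv_mul, div_eq_inv_mul, mul_smul, mul_smul, ← smul_sub, ← cross_smul,
      inv_smul_smul₀ (hp hij)]
  have hcoeff : 0 ≤ cross x (p j) / cross (p i) (p j) * (cross x (p i) / cross (p i) (p j)) := by
    rw [div_mul_div_comm]
    exact div_nonneg hmul (mul_self_nonneg _)
  rcases mul_nonneg_iff.1 hcoeff with ⟨hξ, hη⟩ | ⟨hξ, hη⟩
  · exact ⟨i, j, hij, _, _, hξ, hη, hx⟩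
  · refine ⟨j, i, hij.symm, _, _, neg_nonneg.2 hη, neg_nonneg.2 hξ, hx.trans ?_⟩
    rw [neg_smul, neg_smul]
    abel

end Plane

section UpperBound

variable {ι : Type*} [Fintype ι] {s : ℝ} {w : ι → ℝ}

section Decomposition

variable {E : Type*} [NormedAddCommGroup E] [InnerProductSpace ℝ E] {p a : ι → E} {i j : ι}
  {ξ η : ℝ} {x u : E} {L : Set E}

lemma max_inner_add_max_neg_inner_le {y z : E} (hy : y ∈ L) (hz : z ∈ L) (hu : u ∈ L)
    (hu_neg : -u ∈ L) (hx : ∀ y ∈ L, ∀ z ∈ L, ⟪x, y⟫ - ⟪x, z⟫ ≤ 2) :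
    max ⟪x, y⟫ ⟪x, u⟫ + max (-⟪x, z⟫) ⟪x, u⟫ ≤ 2 := by
  have hxu_neg : ⟪x, -u⟫ = -⟪x, u⟫ := inner_neg_right x u
  rcases max_choice ⟪x, y⟫ ⟪x, u⟫ with hA | hA <;>
    rcases max_choice (-⟪x, z⟫) ⟪x, u⟫ with hB | hB <;> rw [hA, hB] <;>
    linarith [hx _ hy _ hz, hx _ hy _ hu_neg, hx _ hu _ hz, hx _ hu _ hu_neg]

lemma inner_mul_le_of_eq_smul_sub_smul {p₁ p₂ a₁ a₂ : E} (h₁ : ⟪p₁, a₁⟫ = 1) (h₂ : ⟪p₂, a₂⟫ = 1)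
    (h₁₂ : ⟪p₂, a₁⟫ * ⟪p₁, a₂⟫ ≤ 1) (hu₁ : s * ⟪p₁, u⟫ ≤ 1) (hu₂ : -1 ≤ s * ⟪p₂, u⟫)
    (hξ : 0 ≤ ξ) (hη : 0 ≤ η) (hx : x = ξ • p₁ - η • p₂) :
    ⟪x, u⟫ * (s * (1 - ⟪p₂, a₁⟫ * ⟪p₁, a₂⟫)) ≤
      ⟪x, a₁⟫ * (1 + ⟪p₁, a₂⟫) + -⟪x, a₂⟫ * (1 + ⟪p₂, a₁⟫) := by
  have hinner (y : E) : ⟪x, y⟫ = ξ * ⟪p₁, y⟫ - η * ⟪p₂, y⟫ := by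
    rw [hx, inner_sub_left, real_inner_smul_left, real_inner_smul_left]
  have hxu : s * ⟪x, u⟫ ≤ ξ + η := by
    rw [hinner]
    linarith [mul_le_mul_of_nonneg_left hu₁ hξ, mul_le_mul_of_nonneg_left hu₂ hη]
  calc ⟪x, u⟫ * (s * (1 - ⟪p₂, a₁⟫ * ⟪p₁, a₂⟫))
      = s * ⟪x, u⟫ * (1 - ⟪p₂, a₁⟫ * ⟪p₁, a₂⟫) := by ring
    _ ≤ (ξ + η) * (1 - ⟪p₂, a₁⟫ * ⟪p₁, a₂⟫) :=
        mul_le_mul_of_nonneg_right hxu (sub_nonneg.2 h₁₂)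
    _ = ⟪x, a₁⟫ * (1 + ⟪p₁, a₂⟫) + -⟪x, a₂⟫ * (1 + ⟪p₂, a₁⟫) := by
        rw [hinner, hinner, h₁, h₂]
        ring

lemma inner_le_cFun_of_eq_smul_sub_smul (h : IsBalanced s (fun i j => ⟪p i, a j⟫) w)
    (hcard : Fintype.card ι = 3) (hs : phiR < s) (ha : ∀ i, a i ∈ L) (hu : u ∈ L)
    (hu_neg : -u ∈ L) (hpu : ∀ i, |s * ⟪p i, u⟫| ≤ 1)
    (hx : ∀ y ∈ L, ∀ z ∈ L, ⟪x, y⟫ - ⟪x, z⟫ ≤ 2) (hij : i ≠ j) (hξ : 0 ≤ ξ) (hη : 0 ≤ η)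
    (hx_eq : x = ξ • p i - η • p j) : ⟪x, u⟫ ≤ cFun s := by
  have hji_ge : 0 ≤ 1 + ⟪p j, a i⟫ := by
    nlinarith [one_lt_of_phiR_lt hs, h.neg_one_le j i]
  have hij_ge : 0 ≤ 1 + ⟪p i, a j⟫ := by
    nlinarith [one_lt_of_phiR_lt hs, h.neg_one_le i j]
  refine le_cFun_of_mul_le (α := -⟪p j, a i⟫) (β := -⟪p i, a j⟫) hs (h.le_two hcard.le)
    (neg_nonneg.2 (h.entry_nonpos hcard hs hij)) (by linarith [h.neg_one_le j i])
    (neg_nonneg.2 (h.entry_nonpos hcard hs hij.symm)) (by linarith [h.neg_one_le i j])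
    (h.sq_sub_one_sq_le hcard hs hij)
    (max_inner_add_max_neg_inner_le (ha i) (ha j) hu hu_neg hx)
    (le_max_right _ _) (le_max_right _ _) ?_
  rw [neg_mul_neg, sub_neg_eq_add, sub_neg_eq_add]
  calc ⟪x, u⟫ * (s * (1 - ⟪p j, a i⟫ * ⟪p i, a j⟫))
      ≤ ⟪x, a i⟫ * (1 + ⟪p i, a j⟫) + -⟪x, a j⟫ * (1 + ⟪p j, a i⟫) :=
        inner_mul_le_of_eq_smul_sub_smul (h.diag i) (h.diag j)
          (h.entry_mul_entry_lt_one hcard hs hij).le (abs_le.1 (hpu i)).2 (abs_le.1 (hpu j)).1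
          hξ hη hx_eq
    _ ≤ _ := add_le_add (mul_le_mul_of_nonneg_right (le_max_left _ _) hij_ge)
        (mul_le_mul_of_nonneg_right (le_max_left _ _) hji_ge)

end Decomposition

lemma inner_le_cFun_of_isBalanced {p a : ι → E2} (h : IsBalanced s (fun i j => ⟪p i, a j⟫) w)
    (hcard : Fintype.card ι = 3) (hs : phiR < s) {L : Set E2} {x u : E2} (ha : ∀ i, a i ∈ L)
    (hu : u ∈ L) (hu_neg : -u ∈ L) (hpu : ∀ i, |s * ⟪p i, u⟫| ≤ 1)
    (hx : ∀ y ∈ L, ∀ z ∈ L, ⟪x, y⟫ - ⟪x, z⟫ ≤ 2) : ⟪x, u⟫ ≤ cFun s := by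
  have hcross : Pairwise fun i j => cross (p i) (p j) ≠ 0 := fun i j hij => by
    refine right_ne_zero_of_mul (a := cross (a i) (a j)) ?_
    rw [cross_mul_cross, h.diag, h.diag, one_mul]
    exact (sub_pos.2 (h.entry_mul_entry_lt_one hcard hs hij)).ne'
  obtain ⟨i, j, hij, ξ, η, hξ, hη, hx_eq⟩ := exists_eq_smul_sub_smul (by lia) hcross x
  exact inner_le_cFun_of_eq_smul_sub_smul h hcard hs ha hu hu_neg hpu hx hij hξ hη hx_eq

variable {K : Set E2}

lemma exists_isBalanced_contact (hK : IsConvexBody K) (hc : MinkCentered K) :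
    ∃ (ι : Type) (_ : Fintype ι) (p a : ι → E2) (w : ι → ℝ), Fintype.card ι ≤ 3 ∧
      (∀ i, -(minkAsym K • p i) ∈ K) ∧ (∀ i, a i ∈ polarBody K) ∧
      IsBalanced (minkAsym K) (fun i j => ⟪p i, a j⟫) w := by
  obtain ⟨ι, _, a, w, ha, ha_ind, hw_pos, hw_sum, hwa⟩ :=
    eq_pos_convex_span_of_mem_convexHull (zero_mem_convexHull_contactNormals hK hc)
  choose ha_polar p _ hsp hpa using fun i => ha (mem_range_self i)
  have hcard : Fintype.card ι ≤ 3 := by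
    have hrank : Module.finrank ℝ E2 = 2 := finrank_euclideanSpace_fin
    have := ha_ind.card_le_finrank_succ
    have := Submodule.finrank_le (vectorSpan ℝ (range a))
    lia
  refine ⟨ι, inferInstance, p, a, w, hcard, hsp, ha_polar, hw_pos, hw_sum, fun i => ?_, hpa,
    fun i j => ?_⟩
  · simp_rw [← real_inner_smul_right]
    rw [← inner_sum, hwa, inner_zero_right]
  · have h := ha_polar j _ (hsp i)
    rw [inner_neg_left, real_inner_smul_left] at h
    linarith

lemma minkAsym_le_two (hK : IsConvexBody K) (hc : MinkCentered K) : minkAsym K ≤ 2 := by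
  obtain ⟨ι, _, p, a, w, hcard, -, -, hbal⟩ := exists_isBalanced_contact hK hc
  exact hbal.le_two hcard

lemma inner_le_cFun_minkAsym (hK : IsConvexBody K) (hc : MinkCentered K) {x u : E2}
    (hx : x ∈ polarBody ((2 : ℝ)⁻¹ • (polarBody K - polarBody K))) (hu : u ∈ polarBody K)
    (hu_neg : -u ∈ polarBody K) : ⟪x, u⟫ ≤ cFun (minkAsym K) := by
  rw [mem_polarBody_half_smul_sub_iff] at hx
  rcases le_or_gt (minkAsym K) phiR with hs | hs
  · have h := hx u hu (-u) hu_neg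
    rw [inner_neg_right] at h
    rw [cFun_of_le_phiR hs]
    linarith
  obtain ⟨ι, _, p, a, w, hcard_le, hsp, ha, hbal⟩ := exists_isBalanced_contact hK hc
  have hcard : Fintype.card ι = 3 := by
    have h_lt : (2 : ℝ) < Fintype.card ι := by
      linarith [hbal.add_one_le_card, one_lt_of_phiR_lt hs]
    exact hcard_le.antisymm (by exact_mod_cast h_lt)
  refine inner_le_cFun_of_isBalanced hbal hcard hs ha hu hu_neg (fun i => abs_le.2 ⟨?_, ?_⟩) hx
  · have h := hu _ (hsp i)
    rw [inner_neg_left, real_inner_smul_left] at h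
    linarith
  · have h := hu_neg _ (hsp i)
    rwa [inner_neg_left, inner_neg_right, neg_neg, real_inner_smul_left] at h

lemma polarBody_half_smul_sub_subset (hK : IsConvexBody K) (hc : MinkCentered K) :
    polarBody ((2 : ℝ)⁻¹ • (polarBody K - polarBody K)) ⊆
      cFun (minkAsym K) • convexHull ℝ (K ∪ -K) := by
  intro x hx
  by_contra hx_notMem
  obtain ⟨u, hu, hu_neg, hxu⟩ := exists_mem_polarBody_lt_inner_of_notMem_smul_convexHull hK.2.1
    (zero_mem_of_minkCentered hK hc) (cFun_pos (minkAsym_le_two hK hc)) hx_notMem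
  exact hxu.not_ge (inner_le_cFun_minkAsym hK hc hx hu hu_neg)

end UpperBound

theorem stmt12 (K : Set E2) (hK : IsConvexBody K) (hc : MinkCentered K) :
    2 / (minkAsym K + 1) ≤ gammaB K ∧ gammaB K ≤ cFun (minkAsym K) := by
  have hmem : cFun (minkAsym K) ∈ {ρ : ℝ | 0 < ρ ∧
      polarBody ((2 : ℝ)⁻¹ • (polarBody K - polarBody K)) ⊆ ρ • convexHull ℝ (K ∪ -K)} :=
    ⟨cFun_pos (minkAsym_le_two hK hc), polarBody_half_smul_sub_subset hK hc⟩
  exact ⟨le_csInf ⟨_, hmem⟩ fun ρ hρ => two_div_minkAsym_add_one_le hK hc hρ.1 hρ.2,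
    csInf_le ⟨0, fun ρ hρ => hρ.1.le⟩ hmem⟩
end
end

section
/- Let K ⊆ ℝ² be a Minkowski centered convex body. Then its polar body K° is also Minkowski centered and s(K°) = s(K). -/
open scoped Pointwise RealInnerProductSpace
open Set

noncomputable section

/-!
Write `s` for the asymmetry of `K` and `n` for the dimension. Pairing `K` with `K°` shows that a
dilation factor `ρ` and a center `c` work for `K` iff `(1 + ρ) ⟪c, b⟫ ≤ ρ + ⟪p, b⟫`, and for `K°`
iff `(1 + ρ) ⟪p, c⟫ ≤ ρ + ⟪p, b⟫`, in both cases for all `p ∈ K` and `b ∈ K°`. Taking `c = 0`,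
`K ⊆ -s K` is equivalent to `K° ⊆ -s K°`, so what remains is that no `ρ < s` works for `K°`.

If one did, with center `c`, then every contact pair `(p, b)`, that is, `⟪p, b⟫ = -s`, would
satisfy `⟪p, c⟫ < 0`. For `n` contact pairs `(pᵢ, bᵢ)` the sum `a` of the `pᵢ` satisfies
`⟪a, bⱼ⟫ ≤ (n - 1) - s` for each `j`. When `s > n - 1`, this is negative, and Helly's theorem
in the `(n - 1)`-dimensional hyperplane `⟪-c, a⟫ = 1` yields one `a` with `⟪a, b⟫ < 0` for all
contact pairs. Moving the center of `K` slightly in the direction `a` then brings the factor for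
`K` below `s`, which is absurd. In the plane `s > n - 1` only excludes `s = 1`, where `(-p, -b)` is
a contact pair along with `(p, b)`, so that there are no contact pairs at all, which is absurd for
the same reason.
-/

open scoped Topology

theorem helly_theorem_compact_hyperplane {E : Type*} [NormedAddCommGroup E] [NormedSpace ℝ E]
    [FiniteDimensional ℝ E] {ι : Type*} {F : ι → Set E} {f : E →L[ℝ] ℝ} (hf : f ≠ 0)
    (hconv : ∀ i, Convex ℝ (F i)) (hcomp : ∀ i, IsCompact (F i))
    (hinter : ∀ I : Finset ι, I.Nonempty → I.card ≤ Module.finrank ℝ E →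
      ∃ a, f a = 1 ∧ ∀ i ∈ I, a ∈ F i) :
    ∃ a, f a = 1 ∧ ∀ i, a ∈ F i := by
  obtain ⟨o, ho⟩ : ∃ o, f o = 1 := by
    obtain ⟨x, hx⟩ := DFunLike.ne_iff.1 hf
    exact ⟨(f x)⁻¹ • x, by simp_all⟩
  let H : Submodule ℝ E := f.toLinearMap.ker
  have hdim : Module.finrank ℝ H + 1 = Module.finrank ℝ E :=
    Module.Dual.finrank_ker_add_one_of_ne_zero fun h ↦ hf (ContinuousLinearMap.coe_injective h)
  have hemb : Topology.IsClosedEmbedding fun z : H ↦ o + z :=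
    (Homeomorph.addLeft o).isClosedEmbedding.comp
      H.closed_of_finiteDimensional.isClosedEmbedding_subtypeVal
  obtain ⟨z, hz⟩ := Convex.helly_theorem_compact' (𝕜 := ℝ) (F := fun i ↦ {z : H | o + z ∈ F i})
    (fun i ↦ ((hconv i).translate_preimage_right o).linear_preimage H.subtype)
    (fun i ↦ hemb.isCompact_preimage (hcomp i)) fun I hI ↦ by
      rcases I.eq_empty_or_nonempty with rfl | hne
      · simp
      obtain ⟨a, ha, haF⟩ := hinter I hne (hdim ▸ hI)
      exact ⟨⟨a - o, by simp [H, ha, ho]⟩, by simpa using haF⟩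
  exact ⟨o + z, by simp [ho, show f z = 0 from z.2], fun i ↦ mem_iInter.1 hz i⟩

theorem exists_pos_forall_sub_mul_le {X : Type*} [TopologicalSpace X] {M : Set X}
    (hM : IsCompact M) {f g : X → ℝ} (hf : Continuous f) (hg : Continuous g) {s : ℝ}
    (hfs : ∀ x ∈ M, f x ≤ s) (hpos : ∀ x ∈ M, f x = s → 0 < g x) :
    ∃ t > 0, ∃ r < s, ∀ x ∈ M, f x - t * g x ≤ r := by
  have hlocal : ∀ x ∈ M, ∀ᶠ z : ℝ × X in 𝓝 (0, x),
      0 < z.1 → z.2 ∈ M → f z.2 - z.1 * g z.2 < s := by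
    intro x hx
    rcases (hfs x hx).lt_or_eq with hlt | heq
    · have hcont : Continuous fun z : ℝ × X ↦ f z.2 - z.1 * g z.2 := by fun_prop
      filter_upwards [hcont.continuousAt.eventually_lt_const (by simpa using hlt)] with z hz _ _
        using hz
    · have hcont : Continuous fun z : ℝ × X ↦ g z.2 := by fun_prop
      filter_upwards [hcont.continuousAt.eventually_const_lt (hpos x hx heq)] with z hz ht hzM
      linarith [hfs _ hzM, mul_pos ht hz]
  have hglobal : ∀ᶠ t in 𝓝 (0 : ℝ), ∀ x ∈ M, 0 < t → x ∈ M → f x - t * g x < s :=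
    hM.eventually_forall_of_forall_eventually hlocal
  obtain ⟨t, ht, ht0⟩ := ((hglobal.filter_mono nhdsWithin_le_nhds).and
    (self_mem_nhdsWithin : Ioi 0 ∈ 𝓝[>] (0 : ℝ))).exists
  rcases M.eq_empty_or_nonempty with rfl | hne
  · exact ⟨t, ht0, s - 1, by simp⟩
  obtain ⟨m, hm, hmax⟩ := hM.exists_isMaxOn hne (f := fun x ↦ f x - t * g x) (by fun_prop)
  exact ⟨t, ht0, _, ht m hm ht0 hm, fun x hx ↦ hmax hx⟩

section ReflectionCenter

variable {E : Type*} [NormedAddCommGroup E] [NormedSpace ℝ E] {K : Set E} {ρ : ℝ} {c : E}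

/-- `K` is covered by its reflection through `c` after dilation by `ρ` about `c`: the condition
whose infimum over `ρ` is the Minkowski asymmetry. -/
def IsReflectionCenter (K : Set E) (ρ : ℝ) (c : E) : Prop := K - {c} ⊆ ρ • ({c} - K)

/-- Minkowski asymmetry in an arbitrary normed space; on the plane it unfolds to `minkAsym`. -/
def asymmetry (K : Set E) : ℝ := sInf {ρ : ℝ | 0 < ρ ∧ ∃ c : E, IsReflectionCenter K ρ c}

theorem isReflectionCenter_iff_exists :
    IsReflectionCenter K ρ c ↔ ∀ x ∈ K, ∃ y ∈ K, x - c = ρ • (c - y) := by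
  simp only [IsReflectionCenter, sub_singleton, singleton_sub, subset_def, forall_mem_image,
    mem_smul_set, exists_mem_image, eq_comm (a := ρ • _)]

theorem isReflectionCenter_iff_smul_mem (hρ : ρ ≠ 0) :
    IsReflectionCenter K ρ c ↔ ∀ x ∈ K, ρ⁻¹ • ((1 + ρ) • c - x) ∈ K := by
  rw [isReflectionCenter_iff_exists]
  refine forall₂_congr fun x _ ↦ ⟨?_, fun h ↦ ⟨_, h, ?_⟩⟩
  · rintro ⟨y, hy, hxy⟩
    have hρy : (1 + ρ) • c - x = ρ • y := by linear_combination (norm := module) -hxy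
    rwa [hρy, inv_smul_smul₀ hρ]
  · rw [smul_sub, smul_inv_smul₀ hρ]
    module

theorem isReflectionCenter_zero_iff : IsReflectionCenter K ρ 0 ↔ K ⊆ ρ • -K := by
  simp [IsReflectionCenter]

theorem asymmetry_le (hρ : 0 < ρ) (h : IsReflectionCenter K ρ c) : asymmetry K ≤ ρ :=
  csInf_le ⟨0, fun _ hr ↦ hr.1.le⟩ ⟨hρ, c, h⟩

theorem asymmetry_nonneg (K : Set E) : 0 ≤ asymmetry K :=
  Real.sInf_nonneg fun _ hr ↦ hr.1.le

theorem one_le_of_isReflectionCenter (hb : Bornology.IsBounded K) (hK : K.Nontrivial) (hρ : 0 ≤ ρ)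
    (h : IsReflectionCenter K ρ c) : 1 ≤ ρ := by
  rw [isReflectionCenter_iff_exists] at h
  have hdiam : Metric.diam K ≤ ρ * Metric.diam K := by
    refine Metric.diam_le_of_forall_dist_le (by positivity) fun x hx x' hx' ↦ ?_
    obtain ⟨y, hy, hxy⟩ := h x hx
    obtain ⟨y', hy', hxy'⟩ := h x' hx'
    have hsub : x - x' = ρ • (y' - y) := by linear_combination (norm := module) hxy - hxy'
    rw [dist_eq_norm, hsub, norm_smul, Real.norm_of_nonneg hρ, ← dist_eq_norm]
    gcongr
    exact Metric.dist_le_diam_of_mem hb hy' hy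
  exact (le_mul_iff_one_le_left (Metric.diam_pos hK hb)).1 hdiam

theorem one_le_asymmetry [Nontrivial E] (hb : Bornology.IsBounded K)
    (hint : (interior K).Nonempty) (h : K ⊆ asymmetry K • -K) : 1 ≤ asymmetry K := by
  obtain ⟨x, hx⟩ := hint
  have hK : K.Nontrivial := (infinite_of_mem_nhds x (mem_interior_iff_mem_nhds.1 hx)).nontrivial
  exact one_le_of_isReflectionCenter hb hK (asymmetry_nonneg K) (isReflectionCenter_zero_iff.2 h)

theorem zero_mem_interior_of_isReflectionCenter (hconv : Convex ℝ K) (hint : (interior K).Nonempty)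
    (hρ : 0 < ρ) (h : IsReflectionCenter K ρ 0) : (0 : E) ∈ interior K := by
  obtain ⟨x, hx⟩ := hint
  obtain ⟨y, hy, hxy⟩ := isReflectionCenter_iff_exists.1 h x (interior_subset hx)
  have hcombo := hconv.combo_interior_self_mem_interior hx hy (a := (1 + ρ)⁻¹) (b := ρ / (1 + ρ))
    (by positivity) (by positivity) (by field_simp)
  rw [sub_zero, zero_sub] at hxy
  convert hcombo
  rw [hxy]
  module

end ReflectionCenter

section Polar

variable {E : Type*} [NormedAddCommGroup E] [InnerProductSpace ℝ E] {K : Set E}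

/-- The (one-sided) polar of a set in a real inner product space; on the plane it unfolds to
`polarBody`. Mathlib's `LinearMap.polar` bounds the absolute value of the pairing instead. -/
def polarSet (K : Set E) : Set E := {y | ∀ x ∈ K, ⟪x, y⟫ ≤ 1}

theorem isClosed_polarSet (K : Set E) : IsClosed (polarSet K) := by
  simp only [polarSet, ofPred_forall]
  exact isClosed_biInter fun x _ ↦ isClosed_le (by fun_prop) continuous_const

theorem isBounded_polarSet (h0 : (0 : E) ∈ interior K) : Bornology.IsBounded (polarSet K) := by
  obtain ⟨r, hr, hrK⟩ :=
    Metric.nhds_basis_closedBall.mem_iff.1 (mem_interior_iff_mem_nhds.1 h0)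
  refine isBounded_iff_forall_norm_le.2 ⟨r⁻¹, fun y hy ↦ ?_⟩
  rcases eq_or_ne y 0 with rfl | hy0
  · simpa using hr.le
  have hmem : (r / ‖y‖) • y ∈ K := hrK <| by
    simp [norm_smul, abs_of_pos hr, hy0]
  have hinner : r * ‖y‖ ≤ 1 := by
    convert hy _ hmem using 1
    rw [real_inner_smul_left, real_inner_self_eq_norm_sq]
    field_simp
  rwa [← one_div, le_div_iff₀' hr]

theorem isCompact_polarSet [FiniteDimensional ℝ E] (h0 : (0 : E) ∈ interior K) :
    IsCompact (polarSet K) :=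
  Metric.isCompact_of_isClosed_isBounded (isClosed_polarSet K) (isBounded_polarSet h0)

theorem mem_iff_forall_polarSet_inner_le_one [CompleteSpace E] (hconv : Convex ℝ K)
    (hcl : IsClosed K) (h0 : (0 : E) ∈ K) {x : E} : x ∈ K ↔ ∀ b ∈ polarSet K, ⟪x, b⟫ ≤ 1 := by
  refine ⟨fun hx b hb ↦ hb x hx, fun h ↦ ?_⟩
  by_contra hx
  obtain ⟨f, t, hft, htx⟩ := geometric_hahn_banach_closed_point hconv hcl hx
  obtain ⟨v, rfl⟩ := (InnerProductSpace.toDual ℝ E).surjective f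
  simp only [InnerProductSpace.toDual_apply_apply, real_inner_comm _ v] at hft htx
  have ht : 0 < t := by simpa using hft 0 h0
  have hv : t⁻¹ • v ∈ polarSet K := fun y hy ↦ by
    rw [real_inner_smul_right, inv_mul_le_one₀ ht]
    exact (hft y hy).le
  have := h _ hv
  rw [real_inner_smul_right, inv_mul_le_one₀ ht] at this
  exact this.not_gt htx

variable {ρ : ℝ} {c : E}

theorem isReflectionCenter_iff_inner_le [CompleteSpace E] (hconv : Convex ℝ K) (hcl : IsClosed K)
    (h0 : (0 : E) ∈ K) (hρ : 0 < ρ) :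
    IsReflectionCenter K ρ c ↔ ∀ p ∈ K, ∀ b ∈ polarSet K, (1 + ρ) * ⟪c, b⟫ ≤ ρ + ⟪p, b⟫ := by
  simp only [isReflectionCenter_iff_smul_mem hρ.ne',
    mem_iff_forall_polarSet_inner_le_one hconv hcl h0, real_inner_smul_left, inner_sub_left,
    inv_mul_le_one₀ hρ, sub_le_iff_le_add]

theorem isReflectionCenter_polarSet_iff_inner_le (hρ : 0 < ρ) :
    IsReflectionCenter (polarSet K) ρ c ↔
      ∀ p ∈ K, ∀ b ∈ polarSet K, (1 + ρ) * ⟪p, c⟫ ≤ ρ + ⟪p, b⟫ := by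
  rw [isReflectionCenter_iff_smul_mem hρ.ne', forall₂_comm]
  refine forall₂_congr fun b _ ↦ forall₂_congr fun p _ ↦ ?_
  rw [real_inner_smul_right, inner_sub_right, real_inner_smul_right, inv_mul_le_one₀ hρ,
    sub_le_iff_le_add]

end Polar

section Contact

variable {E : Type*} [NormedAddCommGroup E] [InnerProductSpace ℝ E] {K : Set E} {s : ℝ}

/-- Pairs `(p, b) ∈ K × K°` with `⟪p, b⟫ = -s`. If `K ⊆ -s • K`, so that `-s` is a lower bound for
the inner product on `K × K°`, then `p` is a point where `K` touches the boundary of `-s • K` and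
`-b` is an outer normal of `-s • K` there. -/
def contactPairs (K : Set E) (s : ℝ) : Set (E × E) :=
  {q | q.1 ∈ K ∧ q.2 ∈ polarSet K ∧ ⟪q.1, q.2⟫ = -s}

theorem asymmetry_lt_of_forall_contactPairs_inner_neg [FiniteDimensional ℝ E] (hconv : Convex ℝ K)
    (hcomp : IsCompact K) (h0 : (0 : E) ∈ interior K) (hs : 0 < s)
    (hcen : IsReflectionCenter K s 0) {a : E} (ha : ∀ q ∈ contactPairs K s, ⟪a, q.2⟫ < 0) :
    asymmetry K < s := by
  have hcenter {ρ : ℝ} {c : E} (hρ : 0 < ρ) := isReflectionCenter_iff_inner_le (c := c) hconv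
    hcomp.isClosed (interior_subset h0) hρ
  have hle : ∀ q ∈ K ×ˢ polarSet K, -⟪q.1, q.2⟫ ≤ s := fun q hq ↦ by
    have := (hcenter hs).1 hcen q.1 hq.1 q.2 hq.2
    simp only [inner_zero_left, mul_zero] at this
    linarith
  obtain ⟨t, -, r, hr, hmax⟩ := exists_pos_forall_sub_mul_le
    (hcomp.prod (isCompact_polarSet h0)) (f := fun q ↦ -⟪q.1, q.2⟫) (g := fun q ↦ -⟪a, q.2⟫)
    (by fun_prop) (by fun_prop) hle
    fun q hq hqs ↦ neg_pos.2 (ha q ⟨hq.1, hq.2, neg_eq_iff_eq_neg.1 hqs⟩)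
  set ρ := max r (s / 2)
  have hρ : 0 < ρ := lt_max_of_lt_right (half_pos hs)
  have hcen' : IsReflectionCenter K ρ ((t / (1 + ρ)) • a) := (hcenter hρ).2 fun p hp b hb ↦ by
    have hpb : -⟪p, b⟫ - t * -⟪a, b⟫ ≤ r := hmax (p, b) ⟨hp, hb⟩
    rw [real_inner_smul_left, ← mul_assoc, mul_div_cancel₀ t (by positivity)]
    linarith [le_max_left r (s / 2)]
  exact (asymmetry_le hρ hcen').trans_lt (max_lt hr (half_lt_self hs))

theorem le_inner_of_mem_contactPairs {ρ : ℝ} {c : E} (hρ : 0 < ρ)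
    (hc : IsReflectionCenter (polarSet K) ρ c) {q : E × E} (hq : q ∈ contactPairs K s) :
    (s - ρ) / (1 + ρ) ≤ ⟪q.1, -c⟫ := by
  have := (isReflectionCenter_polarSet_iff_inner_le hρ).1 hc q.1 hq.1 q.2 hq.2.1
  rw [hq.2.2] at this
  rw [inner_neg_right, div_le_iff₀ (by positivity)]
  linarith

theorem neg_mem_contactPairs_one (hK : IsReflectionCenter K 1 0)
    (hK' : IsReflectionCenter (polarSet K) 1 0) {q : E × E} (hq : q ∈ contactPairs K 1) :
    -q ∈ contactPairs K 1 := by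
  rw [isReflectionCenter_iff_smul_mem one_ne_zero] at hK hK'
  exact ⟨by simpa using hK _ hq.1, by simpa using hK' _ hq.2.1, by simpa using hq.2.2⟩

theorem inner_sum_le_card_sub {ι : Type*} {p b : ι → E} (hle : ∀ i j, ⟪p i, b j⟫ ≤ 1)
    (heq : ∀ i, ⟪p i, b i⟫ = -s) {I : Finset ι} {j : ι} (hj : j ∈ I) :
    ⟪∑ i ∈ I, p i, b j⟫ ≤ I.card - (s + 1) := by
  classical
  have hrest : ∑ i ∈ I.erase j, ⟪p i, b j⟫ ≤ (I.erase j).card := by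
    simpa using Finset.sum_le_card_nsmul _ _ 1 fun i _ ↦ hle i j
  rw [sum_inner, ← Finset.add_sum_erase _ _ hj, heq]
  rw [Finset.cast_card_erase_of_mem hj] at hrest
  linarith

theorem exists_inner_eq_one_of_card_le {ι : Type*} {p b : ι → E} {u : E} {R η : ℝ} {n : ℕ}
    (hns : n < s + 1) (hle : ∀ i j, ⟪p i, b j⟫ ≤ 1) (heq : ∀ i, ⟪p i, b i⟫ = -s)
    (hR : ∀ i, ‖p i‖ ≤ R) (hη : 0 < η) (hu : ∀ i, η ≤ ⟪p i, u⟫) {I : Finset ι} (hI : I.Nonempty)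
    (hIn : I.card ≤ n) :
    ∃ a, ⟪u, a⟫ = 1 ∧ ‖a‖ ≤ R / η ∧ ∀ j ∈ I, ⟪a, b j⟫ ≤ -((s + 1 - n) / (n * (R * ‖u‖))) := by
  set m := ∑ i ∈ I, p i
  have hcard : (0 : ℝ) < I.card := by exact_mod_cast hI.card_pos
  have hcard_le : (I.card : ℝ) ≤ n := by exact_mod_cast hIn
  have hm_norm : ‖m‖ ≤ I.card * R := by
    simpa using norm_sum_le_of_le I fun i _ ↦ hR i
  have hm_inner : I.card * η ≤ ⟪m, u⟫ := by
    simpa [m, sum_inner] using Finset.card_nsmul_le_sum I (fun i ↦ ⟪p i, u⟫) η fun i _ ↦ hu i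
  have hm_pos : 0 < ⟪m, u⟫ := lt_of_lt_of_le (by positivity) hm_inner
  have hR0 : 0 ≤ R := (norm_nonneg _).trans (hR hI.choose)
  refine ⟨⟪m, u⟫⁻¹ • m, ?_, ?_, fun j hj ↦ ?_⟩
  · rw [real_inner_smul_right, real_inner_comm m u, inv_mul_cancel₀ hm_pos.ne']
  · rw [norm_smul, norm_inv, Real.norm_of_nonneg hm_pos.le, inv_mul_eq_div]
    calc ‖m‖ / ⟪m, u⟫ ≤ (I.card * R) / (I.card * η) := by gcongr
      _ = R / η := mul_div_mul_left _ _ hcard.ne'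
  · have hm_le : ⟪m, u⟫ ≤ n * (R * ‖u‖) := calc
      ⟪m, u⟫ ≤ ‖m‖ * ‖u‖ := real_inner_le_norm m u
      _ ≤ n * R * ‖u‖ := by gcongr; exact hm_norm.trans (by gcongr)
      _ = n * (R * ‖u‖) := mul_assoc _ _ _
    have hgap : s + 1 - n ≤ -⟪m, b j⟫ := by linarith [inner_sum_le_card_sub hle heq hj]
    rw [real_inner_smul_left, inv_mul_eq_div, le_neg, ← neg_div]
    exact div_le_div₀ (by linarith) hgap hm_pos hm_le

theorem exists_forall_inner_neg [FiniteDimensional ℝ E] {ι : Type*} {p b : ι → E} {u : E}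
    {R η : ℝ} (hs : Module.finrank ℝ E < s + 1) (hle : ∀ i j, ⟪p i, b j⟫ ≤ 1)
    (heq : ∀ i, ⟪p i, b i⟫ = -s) (hR : ∀ i, ‖p i‖ ≤ R) (hη : 0 < η) (hu : ∀ i, η ≤ ⟪p i, u⟫) :
    ∃ a, ∀ i, ⟪a, b i⟫ < 0 := by
  rcases isEmpty_or_nonempty ι with _ | ⟨⟨i₀⟩⟩
  · exact ⟨0, isEmptyElim⟩
  have hpu : 0 < ⟪p i₀, u⟫ := hη.trans_le (hu i₀)
  have hf : innerSL ℝ u ≠ 0 := fun h ↦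
    hpu.ne' (by simpa [real_inner_comm] using DFunLike.congr_fun h (p i₀))
  have hRu : 0 < R * ‖u‖ := hpu.trans_le <| (real_inner_le_norm _ _).trans <| by
    gcongr; exact hR i₀
  have hdim : 0 < Module.finrank ℝ E :=
    Module.finrank_pos_iff_exists_ne_zero.2 ⟨u, by rintro rfl; simp at hpu⟩
  set δ := (s + 1 - Module.finrank ℝ E) / (Module.finrank ℝ E * (R * ‖u‖))
  have hδ : 0 < δ := div_pos (by linarith) (by positivity)
  obtain ⟨a, -, ha⟩ := helly_theorem_compact_hyperplane hf
    (F := fun i ↦ Metric.closedBall 0 (R / η) ∩ {a | ⟪a, b i⟫ ≤ -δ})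
    (fun i ↦ (convex_closedBall 0 _).inter (convex_halfSpace_le
      (((innerₗ E).flip (b i)).isLinear) _))
    (fun i ↦ (isCompact_closedBall 0 _).inter_right (isClosed_le (by fun_prop) continuous_const))
    fun I hI hIn ↦ by
      obtain ⟨a, hau, haR, hab⟩ := exists_inner_eq_one_of_card_le hs hle heq hR hη hu hI hIn
      exact ⟨a, hau, fun i hi ↦ ⟨mem_closedBall_zero_iff.2 haR, hab i hi⟩⟩
  exact ⟨a, fun i ↦ (ha i).2.trans_lt (neg_lt_zero.2 hδ)⟩

end Contact

section Main

variable {E : Type*} [NormedAddCommGroup E] [InnerProductSpace ℝ E] {K : Set E}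

theorem isReflectionCenter_zero_polarSet {s : ℝ} (hs : 0 < s) (hK : IsReflectionCenter K s 0) :
    IsReflectionCenter (polarSet K) s 0 := by
  rw [isReflectionCenter_polarSet_iff_inner_le hs]
  rw [isReflectionCenter_iff_smul_mem hs.ne'] at hK
  intro p hp b hb
  have h := hb _ (hK p hp)
  rw [smul_zero, zero_sub, real_inner_smul_left, inner_neg_left, inv_mul_le_one₀ hs] at h
  rw [inner_zero_right, mul_zero]
  linarith

theorem exists_forall_contactPairs_inner_neg [FiniteDimensional ℝ E] {s ρ : ℝ} {c : E}
    (hb : Bornology.IsBounded K) (hK : IsReflectionCenter K s 0)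
    (hs : s = 1 ∨ Module.finrank ℝ E < s + 1) (hρ : 0 < ρ) (hρs : ρ < s)
    (hc : IsReflectionCenter (polarSet K) ρ c) :
    ∃ a, ∀ q ∈ contactPairs K s, ⟪a, q.2⟫ < 0 := by
  have hη : 0 < (s - ρ) / (1 + ρ) := div_pos (sub_pos.2 hρs) (by positivity)
  have hpos {q : E × E} (hq : q ∈ contactPairs K s) : 0 < ⟪q.1, -c⟫ :=
    hη.trans_le (le_inner_of_mem_contactPairs hρ hc hq)
  rcases hs with rfl | hs
  · refine ⟨0, fun q hq ↦ absurd (hpos hq) ?_⟩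
    have hneg := hpos (neg_mem_contactPairs_one hK (isReflectionCenter_zero_polarSet one_pos hK) hq)
    rw [Prod.fst_neg, inner_neg_left] at hneg
    linarith
  · obtain ⟨R, hR⟩ := hb.exists_norm_le
    obtain ⟨a, ha⟩ := exists_forall_inner_neg (ι := contactPairs K s) (p := fun q ↦ q.1.1)
      (b := fun q ↦ q.1.2) hs (fun q q' ↦ q'.2.2.1 _ q.2.1) (fun q ↦ q.2.2.2)
      (fun q ↦ hR _ q.2.1) hη fun q ↦ le_inner_of_mem_contactPairs hρ hc q.2
    exact ⟨a, fun q hq ↦ ha ⟨q, hq⟩⟩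

theorem stmt14_general [FiniteDimensional ℝ E] [Nontrivial E] (hconv : Convex ℝ K)
    (hcomp : IsCompact K) (hint : (interior K).Nonempty) (hK : K ⊆ asymmetry K • -K)
    (hs : asymmetry K = 1 ∨ Module.finrank ℝ E < asymmetry K + 1) :
    polarSet K ⊆ asymmetry (polarSet K) • -polarSet K ∧
      asymmetry (polarSet K) = asymmetry K := by
  have hs0 : 0 < asymmetry K := by
    have hdim : (1 : ℝ) ≤ Module.finrank ℝ E := by exact_mod_cast Module.finrank_pos (R := ℝ)
    rcases hs with h | h <;> linarith
  rw [← isReflectionCenter_zero_iff] at hK ⊢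
  have hpolar := isReflectionCenter_zero_polarSet hs0 hK
  have h0 := zero_mem_interior_of_isReflectionCenter hconv hint hs0 hK
  have hleast : IsLeast {ρ : ℝ | 0 < ρ ∧ ∃ c : E, IsReflectionCenter (polarSet K) ρ c}
      (asymmetry K) := by
    refine ⟨⟨hs0, 0, hpolar⟩, fun ρ ⟨hρ, c, hc⟩ ↦ le_of_not_gt fun hρs ↦ ?_⟩
    obtain ⟨a, ha⟩ := exists_forall_contactPairs_inner_neg hcomp.isBounded hK hs hρ hρs hc
    exact (asymmetry_lt_of_forall_contactPairs_inner_neg hconv hcomp h0 hs0 hK ha).false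
  have heq : asymmetry (polarSet K) = asymmetry K := hleast.csInf_eq
  exact ⟨heq ▸ hpolar, heq⟩

end Main

theorem stmt14 (K : Set E2) (hK : IsConvexBody K) (hc : MinkCentered K) :
    MinkCentered (polarBody K) ∧ minkAsym (polarBody K) = minkAsym K := by
  obtain ⟨hconv, hcomp, hint⟩ := hK
  have hs : 1 ≤ minkAsym K := one_le_asymmetry hcomp.isBounded hint hc
  exact stmt14_general hconv hcomp hint hc <| hs.eq_or_lt.imp Eq.symm fun hlt ↦ by
    rw [finrank_euclideanSpace_fin]
    exact_mod_cast (by linarith : (2 : ℝ) < minkAsym K + 1)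
end
end

section
/- Let K ⊆ ℝ² be a Minkowski centered convex body and C ⊆ ℝ² a 0-symmetric convex body such that K is pseudo-complete with respect to C and 0 is an incenter of K with respect to C (i.e. r(K,C)·C ⊆ K). Then D(K,C)/w(K,C) ≤ ((s(K)+1)/2)·τ(K). -/
open scoped Pointwise RealInnerProductSpace
open Set

noncomputable section

/-!
Write `R`, `r`, `D`, `w`, `s`, `τ` for the functionals of the statement. As `C` is convex and
symmetric, `C - C = 2C`, so `D = R(K - K, C)` and `w = r(K - K, C)`. Two inclusions give the bound.

* `K ⊆ -sK` yields `K ⊆ (s / (s + 1)) (K - K)`, hence `R(K, C) ≤ (s / (s + 1)) D`, and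
  pseudo-completeness `r(K, C) + R(K, C) = D` turns this into `D ≤ (s + 1) r(K, C)`.
* As `0` is an incenter, `r(K, C) C ⊆ K ∩ (-K) ⊆ τ (K - K) / 2`, hence `2 r(K, C) ≤ w τ`.
-/

open Bornology Metric Topology

section Pointwise

variable {E : Type*} [AddCommGroup E] [Module ℝ E] {C K : Set E}

lemma sub_eq_two_smul_of_convex_of_neg_eq (hC : Convex ℝ C) (hCneg : -C = C) :
    C - C = (2 : ℝ) • C := by
  rw [sub_eq_add_neg, hCneg, ← one_add_one_eq_two, hC.add_smul zero_le_one zero_le_one, one_smul]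

lemma subset_div_smul_sub_of_subset_smul_neg {s : ℝ} (hs : 0 ≤ s) (hK : K ⊆ s • (-K)) :
    K ⊆ (s / (s + 1)) • (K - K) := by
  intro x hx
  obtain ⟨y, hy, rfl⟩ := hK hx
  refine ⟨s • y - -y, sub_mem_sub hx hy, ?_⟩
  calc (s / (s + 1)) • (s • y - -y) = (s / (s + 1) * (s + 1)) • y := by module
    _ = s • y := by rw [div_mul_cancel₀ s (by positivity)]

lemma inter_neg_subset_half_smul_sub (K : Set E) : K ∩ (-K) ⊆ (2 : ℝ)⁻¹ • (K - K) :=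
  fun x ⟨hx, hxneg⟩ ↦ ⟨x - -x, sub_mem_sub hx hxneg, by module⟩

lemma smul_subset_inter_neg {r : ℝ} (hCneg : -C = C) (hsub : r • C ⊆ K) :
    r • C ⊆ K ∩ (-K) := by
  refine subset_inter hsub ?_
  rw [← hCneg, smul_set_neg]
  exact neg_subset_neg.2 hsub

end Pointwise

lemma zero_mem_interior_of_convex_of_neg_eq {E : Type*} [AddCommGroup E] [Module ℝ E]
    [TopologicalSpace E] [IsTopologicalAddGroup E] [ContinuousConstSMul ℝ E] {C : Set E}
    (hC : Convex ℝ C) (hCneg : -C = C) (hCint : (interior C).Nonempty) : 0 ∈ interior C := by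
  obtain ⟨x, hx⟩ := hCint
  have hneg : -x ∈ C := by
    rw [← hCneg]
    exact neg_mem_neg.2 (interior_subset hx)
  have hmid := hC.combo_interior_self_mem_interior hx hneg
    (a := 1 / 2) (b := 1 / 2) (by norm_num) (by norm_num) (by norm_num)
  simpa using hmid

section Functionals

variable {E : Type*} [AddCommGroup E] [Module ℝ E]

/-- The circumradius `R(K, C)` in a real vector space; it is `0` if no translate of a positive
multiple of `C` contains `K`. -/
def relCircumradius (K C : Set E) : ℝ :=
  sInf {ρ : ℝ | 0 < ρ ∧ ∃ t : E, K ⊆ ρ • C + {t}}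

/-- The inradius `r(K, C)` in a real vector space; it is `0` if `K` contains no translate of a
positive multiple of `C`, and also if it contains such translates for arbitrarily large multiples.
-/
def relInradius (K C : Set E) : ℝ :=
  sSup {ρ : ℝ | 0 < ρ ∧ ∃ t : E, ρ • C + {t} ⊆ K}

/-- The diameter `D(K, C)` in a real vector space. -/
def relDiam (K C : Set E) : ℝ := 2 * relCircumradius (K - K) (C - C)

/-- The width `w(K, C)` in a real vector space. -/
def relWidth (K C : Set E) : ℝ := 2 * relInradius (K - K) (C - C)

/-- The Minkowski asymmetry `s(K)` in a real vector space. -/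
def minkowskiAsymmetry (K : Set E) : ℝ :=
  sInf {ρ : ℝ | 0 < ρ ∧ ∃ c : E, K - {c} ⊆ ρ • ({c} - K)}

/-- `K` is Minkowski centered: the origin is a center realizing the Minkowski asymmetry. -/
def IsMinkowskiCentered (K : Set E) : Prop := K ⊆ minkowskiAsymmetry K • (-K)

/-- The ratio `τ(K)` comparing the minimum `K ∩ (-K)` of `K` and `-K` with their arithmetic mean
`(K - K) / 2`. -/
def minArithMeanRatio (K : Set E) : ℝ :=
  sInf {ρ : ℝ | 0 < ρ ∧ K ∩ (-K) ⊆ ρ • ((2 : ℝ)⁻¹ • (K - K))}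

/-- `K` is pseudo-complete with respect to `C`, the equality case of `r + R ≤ D`. -/
def IsPseudoComplete (K C : Set E) : Prop :=
  relInradius K C + relCircumradius K C = relDiam K C

variable {K C : Set E}

lemma minkowskiAsymmetry_nonneg : 0 ≤ minkowskiAsymmetry K :=
  Real.sInf_nonneg fun _ hρ ↦ hρ.1.le

lemma IsMinkowskiCentered.asymmetry_pos (hK : IsMinkowskiCentered K) (hKnt : K.Nontrivial) :
    0 < minkowskiAsymmetry K := by
  refine minkowskiAsymmetry_nonneg.lt_of_ne' fun hzero ↦ hKnt.not_subsingleton ?_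
  rw [IsMinkowskiCentered, hzero] at hK
  exact subsingleton_singleton.anti (hK.trans (zero_smul_set_subset _))

lemma le_minArithMeanRatio {b : ℝ}
    (hb : ∀ ρ : ℝ, 0 < ρ → K ∩ (-K) ⊆ ρ • ((2 : ℝ)⁻¹ • (K - K)) → b ≤ ρ) :
    b ≤ minArithMeanRatio K :=
  le_csInf ⟨1, one_pos, (inter_neg_subset_half_smul_sub K).trans_eq (one_smul ℝ _).symm⟩
    fun ρ ⟨hρ, hsub⟩ ↦ hb ρ hρ hsub

lemma relCircumradius_le {ρ : ℝ} {t : E} (hρ : 0 < ρ) (hsub : K ⊆ ρ • C + {t}) :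
    relCircumradius K C ≤ ρ :=
  csInf_le ⟨0, fun _ h ↦ h.1.le⟩ ⟨hρ, t, hsub⟩

lemma relCircumradius_smul_right {c : ℝ} (hc : 0 < c) :
    relCircumradius K (c • C) = c⁻¹ * relCircumradius K C := by
  rw [relCircumradius, relCircumradius, ← smul_eq_mul, ← Real.sInf_smul_of_nonneg (by positivity)]
  congr 1
  ext ρ
  simp [mem_inv_smul_set_iff₀ hc.ne', smul_smul, hc, mul_comm c]

lemma relInradius_smul_right {c : ℝ} (hc : 0 < c) :
    relInradius K (c • C) = c⁻¹ * relInradius K C := by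
  rw [relInradius, relInradius, ← smul_eq_mul, ← Real.sSup_smul_of_nonneg (by positivity)]
  congr 1
  ext ρ
  simp [mem_inv_smul_set_iff₀ hc.ne', smul_smul, hc, mul_comm c]

lemma relDiam_eq_relCircumradius_sub (hC : Convex ℝ C) (hCneg : -C = C) :
    relDiam K C = relCircumradius (K - K) C := by
  rw [relDiam, sub_eq_two_smul_of_convex_of_neg_eq hC hCneg, relCircumradius_smul_right two_pos,
    mul_inv_cancel_left₀ two_ne_zero]

lemma relWidth_eq_relInradius_sub (hC : Convex ℝ C) (hCneg : -C = C) :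
    relWidth K C = relInradius (K - K) C := by
  rw [relWidth, sub_eq_two_smul_of_convex_of_neg_eq hC hCneg, relInradius_smul_right two_pos,
    mul_inv_cancel_left₀ two_ne_zero]

end Functionals

section NormedSpace

variable {E : Type*} [NormedAddCommGroup E] [NormedSpace ℝ E] {K C L : Set E}

lemma diam_smul_add_singleton {ρ : ℝ} (hρ : 0 ≤ ρ) (C : Set E) (t : E) :
    diam (ρ • C + {t}) = ρ * diam C := by
  rw [add_singleton, (isometry_add_right t).diam_image, diam_smul₀, Real.norm_of_nonneg hρ]

lemma isBounded_smul_add_singleton (hC : IsBounded C) (ρ : ℝ) (t : E) :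
    IsBounded (ρ • C + {t}) :=
  (hC.smul₀ ρ).add isBounded_singleton

lemma exists_pos_subset_smul (hK : IsBounded K) (hC : C ∈ 𝓝 0) :
    ∃ ρ : ℝ, 0 < ρ ∧ K ⊆ ρ • C := by
  obtain ⟨ρ, hρ, hsub⟩ := ((NormedSpace.isVonNBounded_iff ℝ).2 hK hC).exists_pos
  exact ⟨ρ, hρ, hsub ρ (le_abs_self ρ)⟩

lemma le_relCircumradius (hK : IsBounded K) (hC : C ∈ 𝓝 0) {b : ℝ}
    (hb : ∀ (ρ : ℝ) (t : E), 0 < ρ → K ⊆ ρ • C + {t} → b ≤ ρ) : b ≤ relCircumradius K C := by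
  obtain ⟨ρ₀, hρ₀, hsub₀⟩ := exists_pos_subset_smul hK hC
  exact le_csInf ⟨ρ₀, hρ₀, 0, by simpa using hsub₀⟩ fun ρ ⟨hρ, t, hsub⟩ ↦ hb ρ t hρ hsub

lemma relCircumradius_le_mul_of_subset_smul (hL : IsBounded L) (hC : C ∈ 𝓝 0) {c : ℝ}
    (hc : 0 < c) (hKL : K ⊆ c • L) : relCircumradius K C ≤ c * relCircumradius L C := by
  rw [← div_le_iff₀' hc]
  refine le_relCircumradius hL hC fun ρ t hρ hLt ↦ ?_
  rw [div_le_iff₀' hc]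
  refine relCircumradius_le (t := c • t) (by positivity) ?_
  calc K ⊆ c • (ρ • C + {t}) := hKL.trans (smul_set_mono hLt)
    _ = (c * ρ) • C + {c • t} := by rw [smul_add, smul_smul, smul_set_singleton]

lemma relCircumradius_pos (hK : IsBounded K) (hKnt : K.Nontrivial) (hC : C ∈ 𝓝 0)
    (hCb : IsBounded C) : 0 < relCircumradius K C := by
  have : Nontrivial E := nontrivial_of_nontrivial hKnt
  have hdiamC : 0 < diam C := diam_pos (infinite_of_mem_nhds 0 hC).nontrivial hCb
  refine (div_pos (diam_pos hKnt hK) hdiamC).trans_le ?_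
  refine le_relCircumradius hK hC fun ρ t hρ hsub ↦ ?_
  rw [div_le_iff₀ hdiamC, ← diam_smul_add_singleton hρ.le C t]
  exact diam_mono hsub (isBounded_smul_add_singleton hCb ρ t)

lemma le_relInradius (hK : IsBounded K) (hC : C.Nontrivial) {ρ : ℝ} (hρ : 0 < ρ)
    (hsub : ρ • C ⊆ K) : ρ ≤ relInradius K C := by
  have hCb : IsBounded C := by
    simpa [smul_smul, hρ.ne'] using (hK.subset hsub).smul₀ ρ⁻¹
  refine le_csSup ⟨diam K / diam C, fun σ ⟨hσ, t, hσK⟩ ↦ ?_⟩ ⟨hρ, 0, by simpa using hsub⟩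
  rw [le_div_iff₀ (diam_pos hC hCb), ← diam_smul_add_singleton hσ.le C t]
  exact diam_mono hσK hK

lemma relDiam_pos (hK : IsBounded K) (hKnt : K.Nontrivial) (hC : C ∈ 𝓝 0) (hCb : IsBounded C) :
    0 < relDiam K C := by
  have hKsub : (K - K).Nontrivial := by
    rw [sub_eq_add_neg]
    exact hKnt.add_right hKnt.nonempty.neg
  have hCsub : C - C ∈ 𝓝 0 := by
    filter_upwards [hC] with x hx
    exact ⟨x, hx, 0, mem_of_mem_nhds hC, sub_zero x⟩
  exact mul_pos two_pos (relCircumradius_pos (hK.sub hK) hKsub hCsub (hCb.sub hCb))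

lemma IsMinkowskiCentered.relCircumradius_le (hKc : IsMinkowskiCentered K) (hK : IsBounded K)
    (hKnt : K.Nontrivial) (hC : Convex ℝ C) (hCneg : -C = C) (hC0 : C ∈ 𝓝 0) :
    relCircumradius K C ≤ minkowskiAsymmetry K / (minkowskiAsymmetry K + 1) * relDiam K C := by
  have hs := hKc.asymmetry_pos hKnt
  rw [relDiam_eq_relCircumradius_sub hC hCneg]
  exact relCircumradius_le_mul_of_subset_smul (hK.sub hK) hC0 (by positivity)
    (subset_div_smul_sub_of_subset_smul_neg hs.le hKc)

lemma IsPseudoComplete.relDiam_le_mul_relInradius (hpc : IsPseudoComplete K C)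
    (hKc : IsMinkowskiCentered K) (hK : IsBounded K) (hKnt : K.Nontrivial) (hC : Convex ℝ C)
    (hCneg : -C = C) (hC0 : C ∈ 𝓝 0) :
    relDiam K C ≤ (minkowskiAsymmetry K + 1) * relInradius K C := by
  have hs := hKc.asymmetry_pos hKnt
  rw [← div_le_iff₀' (by positivity)]
  calc relDiam K C / (minkowskiAsymmetry K + 1)
      = relDiam K C - minkowskiAsymmetry K / (minkowskiAsymmetry K + 1) * relDiam K C := by
        field_simp
        ring
    _ ≤ relDiam K C - relCircumradius K C :=
        sub_le_sub_left (hKc.relCircumradius_le hK hKnt hC hCneg hC0) _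
    _ = relInradius K C := (eq_sub_of_add_eq hpc).symm

lemma two_mul_div_le_relWidth (hK : IsBounded K) (hC : Convex ℝ C) (hCneg : -C = C)
    (hCnt : C.Nontrivial) {r ρ : ℝ} (hr : 0 < r) (hrK : r • C ⊆ K)
    (hρ : 0 < ρ) (hρK : K ∩ (-K) ⊆ ρ • ((2 : ℝ)⁻¹ • (K - K))) :
    2 * r / ρ ≤ relWidth K C := by
  rw [relWidth_eq_relInradius_sub hC hCneg]
  refine le_relInradius (hK.sub hK) hCnt (by positivity) ?_
  have hscale : 2 * r / ρ = (ρ * 2⁻¹)⁻¹ * r := by field_simp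
  rw [hscale, mul_smul, ← subset_smul_set_iff₀ (by positivity), mul_smul]
  exact (smul_subset_inter_neg hCneg hrK).trans hρK

lemma relWidth_pos (hK : IsBounded K) (hC : Convex ℝ C) (hCneg : -C = C) (hCnt : C.Nontrivial)
    {r : ℝ} (hr : 0 < r) (hrK : r • C ⊆ K) : 0 < relWidth K C :=
  (by positivity : 0 < 2 * r / 1).trans_le <|
    two_mul_div_le_relWidth hK hC hCneg hCnt hr hrK one_pos
      ((inter_neg_subset_half_smul_sub K).trans_eq (one_smul ℝ _).symm)

lemma two_mul_le_relWidth_mul_minArithMeanRatio (hK : IsBounded K) (hC : Convex ℝ C)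
    (hCneg : -C = C) (hCnt : C.Nontrivial) {r : ℝ} (hr : 0 < r) (hrK : r • C ⊆ K) :
    2 * r ≤ relWidth K C * minArithMeanRatio K := by
  have hw := relWidth_pos hK hC hCneg hCnt hr hrK
  rw [← div_le_iff₀' hw]
  refine le_minArithMeanRatio fun ρ hρ hρK ↦ ?_
  rw [div_le_iff₀' hw, ← div_le_iff₀ hρ]
  exact two_mul_div_le_relWidth hK hC hCneg hCnt hr hrK hρ hρK

theorem stmt16_general (hK : IsBounded K) (hKnt : K.Nontrivial) (hKc : IsMinkowskiCentered K)
    (hC : Convex ℝ C) (hCneg : -C = C) (hCint : (interior C).Nonempty) (hCb : IsBounded C)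
    (hpc : IsPseudoComplete K C) (hinc : relInradius K C • C ⊆ K) :
    relDiam K C / relWidth K C ≤ (minkowskiAsymmetry K + 1) / 2 * minArithMeanRatio K := by
  have : Nontrivial E := nontrivial_of_nontrivial hKnt
  have hC0 : C ∈ 𝓝 0 :=
    mem_interior_iff_mem_nhds.1 (zero_mem_interior_of_convex_of_neg_eq hC hCneg hCint)
  have hCnt : C.Nontrivial := (infinite_of_mem_nhds 0 hC0).nontrivial
  have hs : 0 < minkowskiAsymmetry K + 1 := add_pos (hKc.asymmetry_pos hKnt) one_pos
  have hD : relDiam K C ≤ (minkowskiAsymmetry K + 1) * relInradius K C :=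
    hpc.relDiam_le_mul_relInradius hKc hK hKnt hC hCneg hC0
  have hr : 0 < relInradius K C :=
    pos_of_mul_pos_right ((relDiam_pos hK hKnt hC0 hCb).trans_le hD) hs.le
  have hrw : 2 * relInradius K C ≤ relWidth K C * minArithMeanRatio K :=
    two_mul_le_relWidth_mul_minArithMeanRatio hK hC hCneg hCnt hr hinc
  rw [div_le_iff₀ (relWidth_pos hK hC hCneg hCnt hr hinc)]
  calc relDiam K C ≤ (minkowskiAsymmetry K + 1) / 2 * (2 * relInradius K C) := by linarith
    _ ≤ (minkowskiAsymmetry K + 1) / 2 * (relWidth K C * minArithMeanRatio K) := by gcongr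
    _ = (minkowskiAsymmetry K + 1) / 2 * minArithMeanRatio K * relWidth K C := by ring

end NormedSpace

theorem stmt16 (K C : Set E2) (hK : IsConvexBody K) (hc : MinkCentered K)
    (hC : IsConvexBody C) (hCsym : C = -C)
    (hpc : inrad K C + circum K C = diamB K C)
    (hinc : inrad K C • C ⊆ K) :
    diamB K C / widthB K C ≤ ((minkAsym K + 1) / 2) * tauB K := by
  obtain ⟨x, hx⟩ := hK.2.2
  have hKnt : K.Nontrivial :=
    (infinite_of_mem_nhds x (mem_interior_iff_mem_nhds.1 hx)).nontrivial
  exact stmt16_general hK.2.1.isBounded hKnt hc hC.1 hCsym.symm hC.2.2 hC.2.1.isBounded hpc hinc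
end
end

section
/- Fix τ ∈ [2/3, 1] and set t = 1/τ. For ν ∈ (0,1] define B(ν) = 4t(t+ν−1)/((ν+1)(2t+ν−1)) and S(ν) = (B(ν) + √(B(ν)² + 4))/2, and let ν⁺ = 1 − t + √(t(2−t)). Then ν⁺ ∈ (0,1], S is nondecreasing on (0, ν⁺] and nonincreasing on [ν⁺, 1]; in particular S(ν) ≤ S(ν⁺) for all ν ∈ (0,1]. -/
open scoped Pointwise RealInnerProductSpace
open Set

noncomputable section

/-!
In the shifted variable `u = t + ν - 1` one has `(ν + 1) * (2 * t + ν - 1) = u ^ 2 + 2 * u + r ^ 2`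
with `r = √(t * (2 - t))`, so `B` is `4 * t` times
`u / (u ^ 2 + 2 * u + r ^ 2) = 1 / (u + r ^ 2 / u + 2)`, which increases up to `u = r` and decreases
afterwards; `u = r` is `ν = ν⁺`. The larger root of `x ^ 2 - b * x - 1` is `exp (arsinh (b / 2))`,
which is increasing in `b`, so `S` inherits the monotonicity of `B`.
-/

section Quadratic

variable {K : Type*} [Field K] [LinearOrder K] [IsStrictOrderedRing K] {b r x y : K}

theorem sq_add_mul_add_sq_pos (hr : 0 < r) (hb : -(2 * r) < b) (hx : 0 ≤ x) :
    0 < x ^ 2 + b * x + r ^ 2 := by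
  rcases hx.eq_or_lt with rfl | hx
  · simpa using pow_pos hr 2
  · calc 0 < (x - r) ^ 2 + (b + 2 * r) * x :=
          add_pos_of_nonneg_of_pos (sq_nonneg _) (mul_pos (by linarith) hx)
      _ = x ^ 2 + b * x + r ^ 2 := by ring

theorem div_sq_add_mul_add_sq_le_iff (hx : 0 < x ^ 2 + b * x + r ^ 2)
    (hy : 0 < y ^ 2 + b * y + r ^ 2) :
    x / (x ^ 2 + b * x + r ^ 2) ≤ y / (y ^ 2 + b * y + r ^ 2) ↔
      0 ≤ (y - x) * (r ^ 2 - x * y) := by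
  have cross_difference : y * (x ^ 2 + b * x + r ^ 2) - x * (y ^ 2 + b * y + r ^ 2) =
      (y - x) * (r ^ 2 - x * y) := by ring
  rw [div_le_div_iff₀ hx hy, ← cross_difference, sub_nonneg]

theorem monotoneOn_div_sq_add_mul_add_sq (hr : 0 < r) (hb : -(2 * r) < b) :
    MonotoneOn (fun x => x / (x ^ 2 + b * x + r ^ 2)) (Icc 0 r) := by
  rintro x ⟨hx₀, hxr⟩ y ⟨hy₀, hyr⟩ hxy
  have mul_le_sq : x * y ≤ r ^ 2 := sq r ▸ mul_le_mul hxr hyr hy₀ hr.le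
  exact (div_sq_add_mul_add_sq_le_iff (sq_add_mul_add_sq_pos hr hb hx₀)
    (sq_add_mul_add_sq_pos hr hb hy₀)).2
      (mul_nonneg (sub_nonneg.2 hxy) (sub_nonneg.2 mul_le_sq))

theorem antitoneOn_div_sq_add_mul_add_sq (hr : 0 < r) (hb : -(2 * r) < b) :
    AntitoneOn (fun x => x / (x ^ 2 + b * x + r ^ 2)) (Ici r) := by
  intro x (hrx : r ≤ x) y (hry : r ≤ y) hxy
  have hx₀ : 0 ≤ x := hr.le.trans hrx
  have sq_le_mul : r ^ 2 ≤ y * x := sq r ▸ mul_le_mul hry hrx hr.le (hr.le.trans hry)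
  exact (div_sq_add_mul_add_sq_le_iff (sq_add_mul_add_sq_pos hr hb (hx₀.trans hxy))
    (sq_add_mul_add_sq_pos hr hb hx₀)).2
      (mul_nonneg_of_nonpos_of_nonpos (sub_nonpos.2 hxy) (sub_nonpos.2 sq_le_mul))

end Quadratic

theorem exp_arsinh_div_two (b : ℝ) :
    Real.exp (Real.arsinh (b / 2)) = (b + √(b ^ 2 + 4)) / 2 := by
  have sqrt_half : √(1 + (b / 2) ^ 2) = √(b ^ 2 + 4) / 2 := by
    rw [show 1 + (b / 2) ^ 2 = (b ^ 2 + 4) / 2 ^ 2 by ring, Real.sqrt_div (by positivity),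
      Real.sqrt_sq zero_le_two]
  rw [Real.exp_arsinh, sqrt_half, add_div]

theorem monotone_add_sqrt_sq_add_four_div_two :
    Monotone fun b : ℝ => (b + √(b ^ 2 + 4)) / 2 := by
  intro a b hab
  simp only [← exp_arsinh_div_two]
  gcongr

section Coefficient

variable {t : ℝ}

/-- The function `B` of the theorem, the coefficient of the quadratic `x ^ 2 - B x - 1` whose
larger root is `S`, with the parameter `t = 1 / τ` made explicit. -/
def asymCoeff (t ν : ℝ) : ℝ := 4 * t * (t + ν - 1) / ((ν + 1) * (2 * t + ν - 1))

/-- The point `ν⁺` at which `asymCoeff t` is largest. -/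
def asymCrit (t : ℝ) : ℝ := 1 - t + √(t * (2 - t))

theorem asymCoeff_eq_mul_div_sq_add_mul_add_sq (ht : 0 ≤ t * (2 - t)) (ν : ℝ) :
    asymCoeff t ν = 4 * t *
      ((t + ν - 1) / ((t + ν - 1) ^ 2 + 2 * (t + ν - 1) + √(t * (2 - t)) ^ 2)) := by
  rw [asymCoeff, Real.sq_sqrt ht, mul_div_assoc]
  congr 2
  ring

theorem monotoneOn_asymCoeff (ht₀ : 0 < t) (ht₂ : t < 2) :
    MonotoneOn (asymCoeff t) (Icc (1 - t) (asymCrit t)) := by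
  have radicand_pos : 0 < t * (2 - t) := mul_pos ht₀ (sub_pos.2 ht₂)
  have sqrt_pos := Real.sqrt_pos.2 radicand_pos
  rintro x ⟨hx₀, hx⟩ y ⟨hy₀, hy⟩ hxy
  rw [asymCrit] at hx hy
  simp only [asymCoeff_eq_mul_div_sq_add_mul_add_sq radicand_pos.le]
  refine mul_le_mul_of_nonneg_left ?_ (by positivity)
  exact monotoneOn_div_sq_add_mul_add_sq sqrt_pos (by linarith)
    ⟨by linarith, by linarith⟩ ⟨by linarith, by linarith⟩ (by linarith)

theorem antitoneOn_asymCoeff (ht₀ : 0 < t) (ht₂ : t < 2) :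
    AntitoneOn (asymCoeff t) (Ici (asymCrit t)) := by
  have radicand_pos : 0 < t * (2 - t) := mul_pos ht₀ (sub_pos.2 ht₂)
  have sqrt_pos := Real.sqrt_pos.2 radicand_pos
  intro x hx y hy hxy
  rw [mem_Ici, asymCrit] at hx hy
  simp only [asymCoeff_eq_mul_div_sq_add_mul_add_sq radicand_pos.le]
  refine mul_le_mul_of_nonneg_left ?_ (by positivity)
  exact antitoneOn_div_sq_add_mul_add_sq sqrt_pos (by linarith)
    (mem_Ici.2 (by linarith)) (mem_Ici.2 (by linarith)) (by linarith)

theorem asymCrit_pos (ht₁ : 1 ≤ t) (ht : t < 1 + √2 / 2) : 0 < asymCrit t := by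
  have sq_lt_half : (t - 1) ^ 2 < 1 / 2 :=
    calc (t - 1) ^ 2 < (√2 / 2) ^ 2 := by gcongr; linarith
      _ = 1 / 2 := by rw [div_pow, Real.sq_sqrt zero_le_two]; norm_num
  have lt_sqrt : t - 1 < √(t * (2 - t)) := Real.lt_sqrt_of_sq_lt (by linarith)
  rw [asymCrit]
  linarith

theorem asymCrit_le_one (ht₁ : 1 ≤ t) : asymCrit t ≤ 1 := by
  have sqrt_le : √(t * (2 - t)) ≤ t := Real.sqrt_le_iff.2 ⟨by linarith, by nlinarith⟩
  rw [asymCrit]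
  linarith

end Coefficient

theorem two_sub_sqrt_two_pos : 0 < 2 - √2 :=
  sub_pos.2 ((Real.sqrt_lt' two_pos).2 (by norm_num))

theorem one_div_two_sub_sqrt_two : 1 / (2 - √2) = 1 + √2 / 2 := by
  rw [div_eq_iff two_sub_sqrt_two_pos.ne']
  linear_combination Real.sq_sqrt zero_le_two / 2

/-- `2 - √2` is the value of `τ` at which `ν⁺` vanishes. -/
theorem stmt18_general (τ : ℝ) (hτ1 : 2 - √2 < τ) (hτ2 : τ ≤ 1)
    (t : ℝ) (ht : t = 1 / τ)
    (B : ℝ → ℝ) (hB : B = fun ν => 4 * t * (t + ν - 1) / ((ν + 1) * (2 * t + ν - 1)))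
    (S : ℝ → ℝ) (hS : S = fun ν => (B ν + √(B ν ^ 2 + 4)) / 2)
    (νp : ℝ) (hνp : νp = 1 - t + √(t * (2 - t))) :
    νp ∈ Ioc 0 1 ∧
    MonotoneOn S (Icc (1 - t) νp) ∧
    AntitoneOn S (Ici νp) ∧
    IsMaxOn S (Ici (1 - t)) νp := by
  obtain rfl : B = asymCoeff t := hB
  obtain rfl : νp = asymCrit t := hνp
  have hτ₀ : 0 < τ := two_sub_sqrt_two_pos.trans hτ1
  have ht₁ : 1 ≤ t := ht ▸ (one_le_div hτ₀).2 hτ2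
  have ht₂ : t < 1 + √2 / 2 := by
    rw [ht, ← one_div_two_sub_sqrt_two]
    exact one_div_lt_one_div_of_lt two_sub_sqrt_two_pos hτ1
  have ht_lt_two : t < 2 := by linarith [two_sub_sqrt_two_pos]
  have hS_mono : MonotoneOn S (Icc (1 - t) (asymCrit t)) := hS ▸
    monotone_add_sqrt_sq_add_four_div_two.comp_monotoneOn
      (monotoneOn_asymCoeff (by linarith) ht_lt_two)
  have hS_anti : AntitoneOn S (Ici (asymCrit t)) := hS ▸
    monotone_add_sqrt_sq_add_four_div_two.comp_antitoneOn
      (antitoneOn_asymCoeff (by linarith) ht_lt_two)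
  exact ⟨⟨asymCrit_pos ht₁ ht₂, asymCrit_le_one ht₁⟩, hS_mono, hS_anti,
    isMaxOn_Ici_of_mono_anti hS_mono hS_anti⟩

theorem stmt18 (τ : ℝ) (hτ1 : 2/3 ≤ τ) (hτ2 : τ ≤ 1)
    (t : ℝ) (ht : t = 1 / τ)
    (B : ℝ → ℝ) (hB : B = fun ν => 4 * t * (t + ν - 1) / ((ν + 1) * (2 * t + ν - 1)))
    (S : ℝ → ℝ) (hS : S = fun ν => (B ν + Real.sqrt ((B ν) ^ 2 + 4)) / 2)
    (νp : ℝ) (hνp : νp = 1 - t + Real.sqrt (t * (2 - t))) :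
    νp ∈ Set.Ioc (0:ℝ) 1 ∧
    MonotoneOn S (Set.Ioc 0 νp) ∧
    AntitoneOn S (Set.Icc νp 1) ∧
    ∀ ν ∈ Set.Ioc (0:ℝ) 1, S ν ≤ S νp := by
  have hτ : 2 - √2 < τ := by linarith [Real.lt_sqrt_of_sq_lt (show (4 / 3 : ℝ) ^ 2 < 2 by norm_num)]
  have one_sub_le : 1 - t ≤ 0 := sub_nonpos.2 (ht ▸ (one_le_div (by linarith)).2 hτ2)
  obtain ⟨hmem, hmono, hanti, hmax⟩ := stmt18_general τ hτ hτ2 t ht B hB S hS νp hνp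
  exact ⟨hmem, hmono.mono fun ν hν => ⟨one_sub_le.trans hν.1.le, hν.2⟩,
    hanti.mono Icc_subset_Ici_self, fun ν hν => hmax (one_sub_le.trans hν.1.le)⟩
end
end
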